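/- arXiv:1212.2551 — 2 statements merged into one kernel-verified Lean document; each statement's English description precedes it below -/
import Mathlib

section
/- Let n ≥ 2 and suppose Λ is a critical lattice of the unit ball B^n which is unique up to rotation, i.e., every critical lattice of B^n equals UΛ for some orthogonal map U, and suppose the configuration S(Λ) is redundantly semi-eutactic. Then B^n is not a local pessimum for lattice packing: for every ε > 0 there exists an origin-symmetric convex body K with Hausdorff distance δ_H(K, B^n) < ε and φ(K) < φ(B^n). -/
open scoped RealInnerProductSpace
open Metric MeasureTheory

noncomputable section

abbrev Euc (n : ℕ) := EuclideanSpace ℝ (Fin n)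

/-- The rank-one symmetric map `P_x : y ↦ ⟪y, x⟫ • x`. -/
def projMap {F : Type*} [NormedAddCommGroup F] [InnerProductSpace ℝ F] (x : F) :
    F →ₗ[ℝ] F where
  toFun y := (⟪y, x⟫) • x
  map_add' y z := by simp [inner_add_left, add_smul]
  map_smul' c y := by simp [real_inner_smul_left, mul_smul]

/-- A configuration is perfect if the maps `P_x`, `x ∈ S`, span the symmetric maps. -/
def IsPerfectCfg {F : Type*} [NormedAddCommGroup F] [InnerProductSpace ℝ F]
    (S : Set F) : Prop :=
  ∀ T : F →ₗ[ℝ] F, T.IsSymmetric → T ∈ Submodule.span ℝ (projMap '' S)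

/-- A configuration is eutactic if `Id = Σ_{x∈S} υ_x P_x` with `υ_x > 0`, `υ_x = υ_{-x}`. -/
def IsEutacticCfg {F : Type*} [NormedAddCommGroup F] [InnerProductSpace ℝ F]
    (S : Set F) : Prop :=
  ∃ υ : F → ℝ, (∀ x ∈ S, 0 < υ x) ∧ (∀ x ∉ S, υ x = 0) ∧
    (Function.support υ).Finite ∧ (∀ x, υ x = υ (-x)) ∧
    ∑ᶠ x, υ x • projMap x = (LinearMap.id : F →ₗ[ℝ] F)

/-- A configuration is semi-eutactic if `Id = Σ_{x∈S} υ_x P_x` with `υ_x ≥ 0`, `υ_x = υ_{-x}`. -/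
def IsSemiEutacticCfg {F : Type*} [NormedAddCommGroup F] [InnerProductSpace ℝ F]
    (S : Set F) : Prop :=
  ∃ υ : F → ℝ, (∀ x ∈ S, 0 ≤ υ x) ∧ (∀ x ∉ S, υ x = 0) ∧
    (Function.support υ).Finite ∧ (∀ x, υ x = υ (-x)) ∧
    ∑ᶠ x, υ x • projMap x = (LinearMap.id : F →ₗ[ℝ] F)

/-- A configuration is extreme if it is perfect and eutactic. -/
def IsExtremeCfg {F : Type*} [NormedAddCommGroup F] [InnerProductSpace ℝ F]
    (S : Set F) : Prop :=
  IsPerfectCfg S ∧ IsEutacticCfg S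

/-- Hilbert–Schmidt (Frobenius) norm of a linear map on `ℝ^n`. -/
def frobNorm {n : ℕ} (T : Euc n →ₗ[ℝ] Euc n) : ℝ :=
  Real.sqrt (∑ j, ∑ i, (T (EuclideanSpace.single j 1) i) ^ 2)

/-- The lattice `T ℤ^n` as a set of points. -/
def latticeSet {n : ℕ} (T : Euc n →ₗ[ℝ] Euc n) : Set (Euc n) :=
  {v | ∃ z : Fin n → ℤ, v = T (∑ i, (z i : ℝ) • EuclideanSpace.single i 1)}

/-- A set is an (n-dimensional) lattice if it is `T ℤ^n` for an invertible `T`. -/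
def IsLattice {n : ℕ} (Λ : Set (Euc n)) : Prop :=
  ∃ T : Euc n →ₗ[ℝ] Euc n, LinearMap.det T ≠ 0 ∧ Λ = latticeSet T

/-- The determinant `d(Λ) = |det T|` of a lattice. -/
def latDet {n : ℕ} (Λ : Set (Euc n)) : ℝ :=
  sInf {d | ∃ T : Euc n →ₗ[ℝ] Euc n, Λ = latticeSet T ∧ d = |LinearMap.det T|}

/-- The metric `δ(Λ, Λ') = inf ‖T - T'‖` on the space of lattices. -/
def latDist {n : ℕ} (Λ Λ' : Set (Euc n)) : ℝ :=
  sInf {d | ∃ T T' : Euc n →ₗ[ℝ] Euc n,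
    Λ = latticeSet T ∧ Λ' = latticeSet T' ∧ d = frobNorm (T - T')}

/-- The minimal norm `m(Λ)`. -/
def minNorm {n : ℕ} (Λ : Set (Euc n)) : ℝ :=
  sInf {r | ∃ x ∈ Λ, x ≠ 0 ∧ r = ‖x‖ ^ 2}

/-- The set `S(Λ)` of minimal vectors of a lattice. -/
def minVecs {n : ℕ} (Λ : Set (Euc n)) : Set (Euc n) :=
  {x | x ∈ Λ ∧ x ≠ 0 ∧ ‖x‖ ^ 2 = minNorm Λ}

/-- An origin-symmetric convex body. -/
structure IsSymCB {n : ℕ} (K : Set (Euc n)) : Prop where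
  convex : Convex ℝ K
  compact : IsCompact K
  nonempty_interior : (interior K).Nonempty
  symm : -K = K

/-- A lattice is admissible for a body if it meets the interior only at the origin. -/
def IsAdmissible {n : ℕ} (Λ K : Set (Euc n)) : Prop :=
  Λ ∩ interior K ⊆ {0}

/-- The critical determinant `d_K`. -/
def critDet {n : ℕ} (K : Set (Euc n)) : ℝ :=
  sInf {d | ∃ Λ : Set (Euc n), IsLattice Λ ∧ IsAdmissible Λ K ∧ d = latDet Λ}

/-- A critical lattice of `K`: an admissible lattice attaining the critical determinant. -/
def IsCriticalLattice {n : ℕ} (Λ K : Set (Euc n)) : Prop :=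
  IsLattice Λ ∧ IsAdmissible Λ K ∧ latDet Λ = critDet K

/-- The optimal lattice packing fraction `φ(K) = 2⁻ⁿ vol(K) / d_K`. -/
def packFrac {n : ℕ} (K : Set (Euc n)) : ℝ :=
  (volume K).toReal / (2 ^ n * critDet K)

/-- The closed unit ball `Bⁿ`. -/
def unitBall (n : ℕ) : Set (Euc n) := Metric.closedBall 0 1

/-- The support function of a body. -/
def suppFn {n : ℕ} (K : Set (Euc n)) (x : Euc n) : ℝ :=
  sSup ((fun y => ⟪x, y⟫) '' K)

/-- The radial function of a body. -/
def radFn {n : ℕ} (K : Set (Euc n)) (x : Euc n) : ℝ :=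
  sSup {t : ℝ | 0 ≤ t ∧ t • x ∈ K}

/-!
Press in the ball, by an amount of order `ε`, on two small opposite caps centred at `±x`. This
loses volume of order `ε`, so it suffices that the critical determinant drops only by `O(ε²)`.

A lattice admissible for the dented ball with determinant at most that of the ball is nearly
admissible for the ball. By Mahler compactness and the uniqueness of `Λ` it is therefore `A Λ` with
`A†A = 1 + M` and `M` small. A vector `y` of `S(Λ)` can satisfy `‖A y‖ < 1`, that is
`⟪y, M y⟫ < 0`, only if `A y` lies in the caps. Two distinct vectors of `A Λ` in the same cap would
differ by a vector too short for the lattice, so at most one antipodal pair of `S(Λ)` is shortened.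
Removing that pair from `S(Λ)` leaves a semi-eutactic configuration, whence `0 ≤ tr M`. Since `S(Λ)`
is extreme, `M` is of order `ε`, and `det (1 + M) ≥ 1 - O(ε²)` by expanding the logarithm of the
determinant to second order.
-/

section Configurations

variable {F : Type*} [NormedAddCommGroup F] [InnerProductSpace ℝ F]

/-- A configuration is redundantly semi-eutactic if it is extreme and stays semi-eutactic when any
one antipodal pair is removed. -/
def IsRedundantlySemiEutacticCfg (S : Set F) : Prop :=
  IsExtremeCfg S ∧ ∀ x ∈ S, IsSemiEutacticCfg (S \ {x, -x})

theorem projMap_isSymmetric (x : F) : (projMap x).IsSymmetric := fun y z => by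
  simp only [projMap, LinearMap.coe_mk, AddHom.coe_mk, real_inner_smul_right, real_inner_comm]
  ring

theorem IsEutacticCfg.isSemiEutacticCfg {S : Set F} (hS : IsEutacticCfg S) :
    IsSemiEutacticCfg S :=
  let ⟨υ, hpos, hrest⟩ := hS
  ⟨υ, fun x hx => (hpos x hx).le, hrest⟩

theorem IsEutacticCfg.finite {S : Set F} (hS : IsEutacticCfg S) : S.Finite :=
  let ⟨_, hpos, _, hfin, _⟩ := hS
  hfin.subset fun x hx => (hpos x hx).ne'

theorem inner_adjoint_comp_sub_one [CompleteSpace F] (A : F →L[ℝ] F) (y : F) :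
    ⟪y, (A.adjoint ∘L A - 1) y⟫ = ‖A y‖ ^ 2 - ‖y‖ ^ 2 := by
  simp [inner_sub_right, ContinuousLinearMap.adjoint_inner_right]

variable [FiniteDimensional ℝ F]

theorem trace_comp_projMap (M : F →ₗ[ℝ] F) (y : F) :
    LinearMap.trace ℝ F (M ∘ₗ projMap y) = ⟪y, M y⟫ := by
  have hrank : M ∘ₗ projMap y = LinearMap.smulRight (innerₛₗ ℝ y) (M y) := by
    ext x
    simp [projMap, real_inner_comm]
  rw [hrank, LinearMap.trace_smulRight, innerₛₗ_apply_apply]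

theorem trace_eq_sum_of_finsum_projMap_eq_id {υ : F → ℝ} (hfin : υ.support.Finite)
    (hid : ∑ᶠ x, υ x • projMap x = (LinearMap.id : F →ₗ[ℝ] F)) (M : F →ₗ[ℝ] F) :
    LinearMap.trace ℝ F M = ∑ y ∈ hfin.toFinset, υ y * ⟪y, M y⟫ := by
  have hsupp : (fun x => υ x • projMap x).support ⊆ hfin.toFinset := by
    simpa using Function.support_smul_subset_left υ projMap
  have hM : M = ∑ y ∈ hfin.toFinset, υ y • (M ∘ₗ projMap y) := by
    rw [finsum_eq_sum_of_support_subset _ hsupp] at hid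
    simpa only [map_sum, map_smul, LinearMap.compRight_apply, LinearMap.comp_id] using
      (congrArg (LinearMap.compRight ℝ M) hid).symm
  conv_lhs => rw [hM]
  simp only [map_sum, map_smul, trace_comp_projMap, smul_eq_mul]

theorem IsSemiEutacticCfg.trace_nonneg {S : Set F} (hS : IsSemiEutacticCfg S) {M : F →ₗ[ℝ] F}
    (hM : ∀ y ∈ S, 0 ≤ ⟪y, M y⟫) : 0 ≤ LinearMap.trace ℝ F M := by
  obtain ⟨υ, hnonneg, hzero, hfin, -, hid⟩ := hS
  rw [trace_eq_sum_of_finsum_projMap_eq_id hfin hid]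
  refine Finset.sum_nonneg fun y hy => ?_
  have hyS : y ∈ S := not_imp_comm.1 (hzero y) (hfin.mem_toFinset.1 hy)
  exact mul_nonneg (hnonneg y hyS) (hM y hyS)

theorem IsPerfectCfg.eq_zero_of_inner_map_self {S : Set F} (hS : IsPerfectCfg S)
    {M : F →ₗ[ℝ] F} (hM : M.IsSymmetric) (hzero : ∀ y ∈ S, ⟪y, M y⟫ = 0) : M = 0 := by
  let traceMul : (F →ₗ[ℝ] F) →ₗ[ℝ] ℝ := LinearMap.trace ℝ F ∘ₗ LinearMap.compRight ℝ M
  have hspan : Submodule.span ℝ (projMap '' S) ≤ LinearMap.ker traceMul := by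
    rw [Submodule.span_le]
    rintro _ ⟨y, hy, rfl⟩
    exact (trace_comp_projMap M y).trans (hzero y hy)
  refine hM.inner_map_self_eq_zero.1 fun v => ?_
  have hv : traceMul (projMap v) = 0 := hspan (hS _ (projMap_isSymmetric v))
  rw [real_inner_comm, ← trace_comp_projMap]
  exact hv

theorem IsPerfectCfg.exists_norm_le {S : Set F} (hS : IsPerfectCfg S) (hfin : S.Finite) :
    ∃ C > 0, ∀ M : F →L[ℝ] F, (M : F →ₗ[ℝ] F).IsSymmetric → ∀ q : ℝ, 0 ≤ q →
      (∀ y ∈ S, |⟪y, M y⟫| ≤ q) → ‖M‖ ≤ C * q := by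
  have : CompleteSpace F := FiniteDimensional.complete ℝ F
  have : Fintype S := hfin.fintype
  obtain ⟨Sym, mem_Sym⟩ : ∃ Sym : Submodule ℝ (F →L[ℝ] F),
      ∀ M, M ∈ Sym ↔ (M : F →ₗ[ℝ] F).IsSymmetric :=
    ⟨selfAdjoint.submodule ℝ _, fun _ => ContinuousLinearMap.isSelfAdjoint_iff_isSymmetric⟩
  let eval : Sym →ₗ[ℝ] S → ℝ :=
    LinearMap.pi fun y => innerₛₗ ℝ (y : F) ∘ₗ
      (ContinuousLinearMap.apply ℝ F (y : F)).toLinearMap ∘ₗ Sym.subtype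
  have hker : LinearMap.ker eval = ⊥ := by
    refine LinearMap.ker_eq_bot'.2 fun M hM => Subtype.ext (ContinuousLinearMap.coe_injective ?_)
    exact hS.eq_zero_of_inner_map_self ((mem_Sym M).1 M.2) fun y hy => congrFun hM ⟨y, hy⟩
  obtain ⟨C, hC, hanti⟩ :=
    LinearMap.exists_antilipschitzWith (𝕜 := ℝ) (E := Sym) eval hker
  refine ⟨C, hC, fun M hM q hq hbound => ?_⟩
  calc ‖M‖ ≤ C * ‖eval ⟨M, (mem_Sym M).2 hM⟩‖ :=
        hanti.le_mul_norm (map_zero eval) ⟨M, (mem_Sym M).2 hM⟩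
    _ ≤ C * q := by
      gcongr
      exact (pi_norm_le_iff_of_nonneg hq).2 fun y => hbound y y.2

theorem IsExtremeCfg.exists_norm_le {S : Set F} (hS : IsExtremeCfg S) :
    ∃ C > 0, ∀ M : F →L[ℝ] F, (M : F →ₗ[ℝ] F).IsSymmetric → ∀ δ : ℝ, 0 ≤ δ →
      (∀ y ∈ S, -δ ≤ ⟪y, M y⟫) → LinearMap.trace ℝ F M ≤ δ → ‖M‖ ≤ C * δ := by
  have hSfin := hS.2.finite
  obtain ⟨C, hC, hperfect⟩ := hS.1.exists_norm_le hSfin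
  obtain ⟨υ, hpos, hzero, hfin, -, hid⟩ := hS.2
  have hυ (y : F) : 0 ≤ υ y := by
    by_cases hy : y ∈ S
    exacts [(hpos y hy).le, (hzero y hy).ge]
  set W : ℝ := 1 + ∑ y ∈ hfin.toFinset, υ y with hW_def
  have : 0 < W := add_pos_of_pos_of_nonneg one_pos (Finset.sum_nonneg fun y _ => hυ y)
  obtain ⟨b, hb⟩ := (hSfin.image fun y => W / υ y).bddAbove
  refine ⟨C * max 1 b, by positivity, fun M hM δ hδ hlower htrace => ?_⟩
  have hsum : ∑ y ∈ hfin.toFinset, υ y * (⟪y, M y⟫ + δ) ≤ W * δ := by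
    have htr := trace_eq_sum_of_finsum_projMap_eq_id hfin hid M
    simp only [ContinuousLinearMap.coe_coe] at htr
    simp only [mul_add, Finset.sum_add_distrib, ← Finset.sum_mul, ← htr, hW_def]
    linarith
  have hterm_nonneg (y : F) (hy : y ∈ hfin.toFinset) : 0 ≤ υ y * (⟪y, M y⟫ + δ) := by
    have hyS : y ∈ S := not_imp_comm.1 (hzero y) (hfin.mem_toFinset.1 hy)
    exact mul_nonneg (hυ y) (by linarith [hlower y hyS])
  rw [mul_assoc]
  refine hperfect M hM _ (by positivity) fun y hy => abs_le.2 ⟨?_, ?_⟩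
  · nlinarith [hlower y hy, le_max_left 1 b]
  · have hterm : υ y * (⟪y, M y⟫ + δ) ≤ W * δ :=
      (Finset.single_le_sum hterm_nonneg (hfin.mem_toFinset.2 (hpos y hy).ne')).trans hsum
    calc ⟪y, M y⟫ ≤ W * δ / υ y := by
          rw [le_div_iff₀ (hpos y hy)]
          nlinarith [mul_nonneg (hpos y hy).le hδ]
      _ = W / υ y * δ := by ring
      _ ≤ max 1 b * δ := by
          gcongr
          exact (hb (Set.mem_image_of_mem _ hy)).trans (le_max_right 1 b)

theorem sub_two_mul_sq_le_log_one_add {x : ℝ} (hx : |x| ≤ 1 / 2) :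
    x - 2 * x ^ 2 ≤ Real.log (1 + x) := by
  have hlb : -(1 / 2) ≤ x := (abs_le.1 hx).1
  have hpos : 0 < 1 + x := by linarith
  calc x - 2 * x ^ 2 ≤ x / (1 + x) := by
        rw [le_div_iff₀ hpos]
        nlinarith [mul_nonneg (sq_nonneg x) (by linarith : 0 ≤ 1 + 2 * x)]
    _ = 1 - (1 + x)⁻¹ := by field_simp; ring
    _ ≤ Real.log (1 + x) := Real.one_sub_inv_le_log_of_pos hpos

theorem abs_eigenvalues_le_norm {M : F →L[ℝ] F} (hM : (M : F →ₗ[ℝ] F).IsSymmetric) {n : ℕ}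
    (hn : Module.finrank ℝ F = n) (i : Fin n) : |hM.eigenvalues hn i| ≤ ‖M‖ := by
  have hle := M.le_opNorm (hM.eigenvectorBasis hn i)
  have heig : M (hM.eigenvectorBasis hn i) = hM.eigenvalues hn i • hM.eigenvectorBasis hn i :=
    hM.apply_eigenvectorBasis hn i
  simpa only [heig, norm_smul, (hM.eigenvectorBasis hn).norm_eq_one, mul_one,
    Real.norm_eq_abs] using hle

theorem det_one_add_eq_prod_eigenvalues {M : F →ₗ[ℝ] F} (hM : M.IsSymmetric) {n : ℕ}
    (hn : Module.finrank ℝ F = n) :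
    LinearMap.det (1 + M) = ∏ i, (1 + hM.eigenvalues hn i) := by
  have hdiag : LinearMap.toMatrix (hM.eigenvectorBasis hn).toBasis
      (hM.eigenvectorBasis hn).toBasis (1 + M) =
        Matrix.diagonal fun i => 1 + hM.eigenvalues hn i := by
    rw [map_add, LinearMap.toMatrix_one, hM.toMatrix_eigenvectorBasis hn, ← Matrix.diagonal_one,
      Matrix.diagonal_add]
    rfl
  rw [← LinearMap.det_toMatrix (hM.eigenvectorBasis hn).toBasis, hdiag, Matrix.det_diagonal]

theorem trace_sub_le_log_det_one_add {M : F →L[ℝ] F} (hM : (M : F →ₗ[ℝ] F).IsSymmetric)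
    (hnorm : ‖M‖ ≤ 1 / 2) :
    LinearMap.trace ℝ F M - 2 * Module.finrank ℝ F * ‖M‖ ^ 2 ≤
      Real.log (LinearMap.det (1 + (M : F →ₗ[ℝ] F))) := by
  have heig (i) : |hM.eigenvalues rfl i| ≤ ‖M‖ := abs_eigenvalues_le_norm hM rfl i
  have hpos (i) : 0 < 1 + hM.eigenvalues rfl i := by linarith [(abs_le.1 (heig i)).1]
  have htrace : LinearMap.trace ℝ F M = ∑ i, hM.eigenvalues rfl i :=
    hM.trace_eq_sum_eigenvalues rfl
  rw [det_one_add_eq_prod_eigenvalues hM rfl, Real.log_prod fun i _ => (hpos i).ne', htrace]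
  calc ∑ i, hM.eigenvalues rfl i - 2 * Module.finrank ℝ F * ‖M‖ ^ 2
      = ∑ i, (hM.eigenvalues rfl i - 2 * ‖M‖ ^ 2) := by
        rw [Finset.sum_sub_distrib, Finset.sum_const, Finset.card_univ, Fintype.card_fin,
          nsmul_eq_mul]
        ring
    _ ≤ ∑ i, Real.log (1 + hM.eigenvalues rfl i) := by
        refine Finset.sum_le_sum fun i _ => ?_
        have hlog := sub_two_mul_sq_le_log_one_add ((heig i).trans hnorm)
        have hsq := sq_le_sq' (neg_le_of_abs_le (heig i)) (le_of_abs_le (heig i))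
        linarith

theorem det_one_add_pos {M : F →L[ℝ] F} (hM : (M : F →ₗ[ℝ] F).IsSymmetric) (hnorm : ‖M‖ < 1) :
    0 < LinearMap.det (1 + (M : F →ₗ[ℝ] F)) := by
  rw [det_one_add_eq_prod_eigenvalues hM rfl]
  refine Finset.prod_pos fun i _ => ?_
  linarith [(abs_le.1 (abs_eigenvalues_le_norm hM rfl i)).1]

theorem IsRedundantlySemiEutacticCfg.trace_nonneg {S : Set F}
    (hS : IsRedundantlySemiEutacticCfg S) {M : F →ₗ[ℝ] F}
    (hneg : ∀ x ∈ S, ∀ y ∈ S, ⟪x, M x⟫ < 0 → ⟪y, M y⟫ < 0 → y = x ∨ y = -x) :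
    0 ≤ LinearMap.trace ℝ F M := by
  by_cases hall : ∀ y ∈ S, 0 ≤ ⟪y, M y⟫
  · exact hS.1.2.isSemiEutacticCfg.trace_nonneg hall
  · push Not at hall
    obtain ⟨x, hxS, hx⟩ := hall
    refine (hS.2 x hxS).trace_nonneg fun y hy => ?_
    by_contra! hylt
    exact hy.2 (hneg x hxS y hy.1 hx hylt)

/- Redundancy makes the trace nonnegative even though one pair of constraints is relaxed, so a map
decreasing the volume must be dominated by the violation `δ`, and the loss is quadratic in `δ`. -/
theorem IsRedundantlySemiEutacticCfg.exists_one_sub_mul_sq_le_det {S : Set F}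
    (hS : IsRedundantlySemiEutacticCfg S) :
    ∃ C ≥ 0, ∃ η > 0, ∀ M : F →L[ℝ] F, (M : F →ₗ[ℝ] F).IsSymmetric → ‖M‖ ≤ η →
      (∀ x ∈ S, ∀ y ∈ S, ⟪x, M x⟫ < 0 → ⟪y, M y⟫ < 0 → y = x ∨ y = -x) →
      ∀ δ : ℝ, 0 ≤ δ → (∀ y ∈ S, -δ ≤ ⟪y, M y⟫) →
      1 - C * δ ^ 2 ≤ LinearMap.det (1 + (M : F →ₗ[ℝ] F)) := by
  obtain ⟨C, hC, hextreme⟩ := hS.1.exists_norm_le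
  set N : ℝ := ↑(Module.finrank ℝ F)
  have : 0 ≤ N := Nat.cast_nonneg _
  refine ⟨8 * N * C ^ 2, by positivity, min (1 / 2) (1 / (4 * N * C + 1)),
    by positivity, fun M hM hnorm hneg δ hδ hlower => ?_⟩
  have hhalf : ‖M‖ ≤ 1 / 2 := hnorm.trans (min_le_left _ _)
  have hsmall : ‖M‖ * (4 * N * C + 1) ≤ 1 :=
    (le_div_iff₀ (by positivity)).1 (hnorm.trans (min_le_right _ _))
  have hdet : 0 < LinearMap.det (1 + (M : F →ₗ[ℝ] F)) := det_one_add_pos hM (by linarith)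
  rcases le_total 1 (LinearMap.det (1 + (M : F →ₗ[ℝ] F))) with hge | hle
  · have : 0 ≤ 8 * N * C ^ 2 * δ ^ 2 := by positivity
    linarith
  have htrace : 0 ≤ LinearMap.trace ℝ F M := hS.trace_nonneg hneg
  have hlog := trace_sub_le_log_det_one_add hM hhalf
  have hM_le : ‖M‖ ≤ C * (δ + 2 * N * ‖M‖ ^ 2) := by
    refine hextreme M hM _ (by positivity) (fun y hy => ?_) ?_
    · have : 0 ≤ 2 * N * ‖M‖ ^ 2 := by positivity
      linarith [hlower y hy]
    · linarith [Real.log_nonpos hdet.le hle]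
  have hM_le' : ‖M‖ ≤ 2 * C * δ := by
    nlinarith [mul_le_mul_of_nonneg_left hsmall (norm_nonneg M), sq_nonneg ‖M‖]
  have hsq : ‖M‖ ^ 2 ≤ (2 * C * δ) ^ 2 := by gcongr
  calc 1 - 8 * N * C ^ 2 * δ ^ 2 = 1 - 2 * N * (2 * C * δ) ^ 2 := by ring
    _ ≤ 1 - 2 * N * ‖M‖ ^ 2 := by gcongr
    _ ≤ LinearMap.det (1 + (M : F →ₗ[ℝ] F)) := by
        linarith [Real.log_le_sub_one_of_pos hdet]

theorem det_adjoint_comp_self [CompleteSpace F] (A : F →L[ℝ] F) :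
    (A.adjoint ∘L A).det = A.det ^ 2 := by
  rw [← ContinuousLinearMap.normDet_sq, LinearMap.normDet_eq_norm_det, Real.norm_eq_abs]
  exact sq_abs _

theorem IsRedundantlySemiEutacticCfg.exists_one_sub_mul_sq_le_abs_det [CompleteSpace F]
    {S : Set F} (hS : IsRedundantlySemiEutacticCfg S) (hunit : ∀ y ∈ S, ‖y‖ = 1) :
    ∃ C ≥ 0, ∃ η > 0, ∀ A : F →L[ℝ] F, ‖A.adjoint ∘L A - 1‖ ≤ η →
      (∀ x ∈ S, ∀ y ∈ S, ‖A x‖ < 1 → ‖A y‖ < 1 → y = x ∨ y = -x) →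
      ∀ ε : ℝ, 0 ≤ ε → ε ≤ 1 → (∀ y ∈ S, 1 - ε ≤ ‖A y‖) → 1 - C * ε ^ 2 ≤ |A.det| := by
  obtain ⟨C, hC, η, hη, hdet⟩ := hS.exists_one_sub_mul_sq_le_det
  refine ⟨4 * C, by positivity, η, hη, fun A hA hshort ε hε hε1 hlong => ?_⟩
  have inner_eq : ∀ y ∈ S, ⟪y, (A.adjoint ∘L A - 1) y⟫ = ‖A y‖ ^ 2 - 1 := fun y hy => by
    rw [inner_adjoint_comp_sub_one, hunit y hy, one_pow]
  have norm_lt_one : ∀ y ∈ S, ⟪y, (A.adjoint ∘L A - 1) y⟫ < 0 → ‖A y‖ < 1 := fun y hy hneg => by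
    rw [inner_eq y hy, sub_neg] at hneg
    exact (sq_lt_one_iff₀ (norm_nonneg _)).1 hneg
  have hsymm : ((A.adjoint ∘L A - 1 : F →L[ℝ] F) : F →ₗ[ℝ] F).IsSymmetric :=
    ((IsSelfAdjoint.star_mul_self A).sub (.one _)).isSymmetric
  have hsq : 1 - C * (2 * ε) ^ 2 ≤ A.det ^ 2 := by
    have hle := hdet _ hsymm hA
      (fun x hx y hy hx0 hy0 => hshort x hx y hy (norm_lt_one x hx hx0) (norm_lt_one y hy hy0))
      (2 * ε) (by positivity) fun y hy => by
        rw [inner_eq y hy]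
        nlinarith [pow_le_pow_left₀ (sub_nonneg.2 hε1) (hlong y hy) 2]
    rwa [← ContinuousLinearMap.toLinearMap_one, ← ContinuousLinearMap.toLinearMap_add,
      add_sub_cancel, ← ContinuousLinearMap.det, det_adjoint_comp_self] at hle
  rcases le_total |A.det| 1 with hle | hge
  · calc 1 - 4 * C * ε ^ 2 = 1 - C * (2 * ε) ^ 2 := by ring
      _ ≤ |A.det| ^ 2 := by rwa [sq_abs]
      _ ≤ |A.det| := pow_le_of_le_one (abs_nonneg _) hle two_ne_zero
  · exact (sub_le_self _ (by positivity)).trans hge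

end Configurations

section Lattices

variable {n : ℕ}

/-- The standard basis of `ℝⁿ`, as an algebraic basis. -/
def stdBasis (n : ℕ) : Module.Basis (Fin n) ℝ (Euc n) :=
  (EuclideanSpace.basisFun (Fin n) ℝ).toBasis

theorem stdBasis_apply (i : Fin n) : stdBasis n i = EuclideanSpace.single i 1 := by
  simp [stdBasis]

theorem stdBasis_repr (x : Euc n) (i : Fin n) : (stdBasis n).repr x i = x i := by
  simp [stdBasis]

/-- The lattice `T ℤⁿ` as a `ℤ`-submodule; its underlying set is `latticeSet T`. -/
def latticeSubmodule (T : Euc n →ₗ[ℝ] Euc n) : Submodule ℤ (Euc n) :=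
  Submodule.span ℤ (Set.range fun i => T (stdBasis n i))

theorem mem_latticeSubmodule {T : Euc n →ₗ[ℝ] Euc n} {v : Euc n} :
    v ∈ latticeSubmodule T ↔ v ∈ latticeSet T := by
  simp only [latticeSubmodule, Submodule.mem_span_range_iff_exists_fun, latticeSet,
    Set.mem_ofPred_eq, map_sum, map_zsmul, stdBasis_apply, Int.cast_smul_eq_zsmul, eq_comm]

theorem map_stdBasis_mem_latticeSet (T : Euc n →ₗ[ℝ] Euc n) (i : Fin n) :
    T (stdBasis n i) ∈ latticeSet T :=
  mem_latticeSubmodule.1 (Submodule.subset_span (Set.mem_range_self i))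

theorem latticeSet_subset_iff {M T : Euc n →ₗ[ℝ] Euc n} :
    latticeSet M ⊆ latticeSet T ↔ ∀ i, M (stdBasis n i) ∈ latticeSet T := by
  refine ⟨fun h i => h (map_stdBasis_mem_latticeSet M i), fun h v hv => ?_⟩
  have hle : latticeSubmodule M ≤ latticeSubmodule T := by
    rw [latticeSubmodule, Submodule.span_le]
    rintro _ ⟨i, rfl⟩
    exact mem_latticeSubmodule.2 (h i)
  exact mem_latticeSubmodule.1 (hle (mem_latticeSubmodule.2 hv))

theorem latticeSet_comp (A T : Euc n →ₗ[ℝ] Euc n) :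
    latticeSet (A ∘ₗ T) = A '' latticeSet T := by
  ext v
  constructor
  · rintro ⟨z, rfl⟩
    exact ⟨_, ⟨z, rfl⟩, rfl⟩
  · rintro ⟨_, ⟨z, rfl⟩, rfl⟩
    exact ⟨z, rfl⟩

theorem exists_det_eq_mul_intCast {M T : Euc n →ₗ[ℝ] Euc n} (h : latticeSet M ⊆ latticeSet T) :
    ∃ k : ℤ, LinearMap.det M = LinearMap.det T * k := by
  choose z hz using latticeSet_subset_iff.1 h
  let Z : Matrix (Fin n) (Fin n) ℤ := Matrix.of fun i j => z j i
  have hM : M = T ∘ₗ Matrix.toLin (stdBasis n) (stdBasis n) (Z.map (Int.castRingHom ℝ)) := by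
    refine (stdBasis n).ext fun i => ?_
    rw [hz i, LinearMap.comp_apply, Matrix.toLin_self]
    simp only [stdBasis_apply, Z, Matrix.map_apply, Matrix.of_apply, eq_intCast]
  refine ⟨Z.det, ?_⟩
  rw [hM, LinearMap.det_comp, LinearMap.det_toLin, ← RingHom.mapMatrix_apply, ← RingHom.map_det,
    eq_intCast]

theorem abs_det_eq_of_latticeSet_eq {M T : Euc n →ₗ[ℝ] Euc n} (hT : LinearMap.det T ≠ 0)
    (h : latticeSet M = latticeSet T) : |LinearMap.det M| = |LinearMap.det T| := by
  obtain ⟨k, hk⟩ := exists_det_eq_mul_intCast h.subset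
  obtain ⟨l, hl⟩ := exists_det_eq_mul_intCast h.superset
  have hkl : (k : ℝ) * l = 1 := by
    rw [hk, mul_assoc] at hl
    exact mul_left_cancel₀ hT (by rw [← hl, mul_one])
  have hk_unit : |k| = 1 := Int.isUnit_iff_abs_eq.1 (.of_mul_eq_one l (by exact_mod_cast hkl))
  rw [hk, abs_mul, ← Int.cast_abs, hk_unit, Int.cast_one, mul_one]

theorem latDet_latticeSet {T : Euc n →ₗ[ℝ] Euc n} (hT : LinearMap.det T ≠ 0) :
    latDet (latticeSet T) = |LinearMap.det T| := by
  have hset : {d | ∃ M : Euc n →ₗ[ℝ] Euc n, latticeSet T = latticeSet M ∧ d = |LinearMap.det M|} =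
      {|LinearMap.det T|} :=
    Set.eq_singleton_iff_unique_mem.2 ⟨⟨T, rfl, rfl⟩, by
      rintro _ ⟨M, hM, rfl⟩
      exact abs_det_eq_of_latticeSet_eq hT hM.symm⟩
  rw [latDet, hset, csInf_singleton]

theorem latDet_nonneg (Λ : Set (Euc n)) : 0 ≤ latDet Λ := by
  refine Real.sInf_nonneg ?_
  rintro _ ⟨T, -, rfl⟩
  exact abs_nonneg _

theorem isAdmissible_unitBall_iff {Λ : Set (Euc n)} :
    IsAdmissible Λ (unitBall n) ↔ ∀ v ∈ Λ, v ≠ 0 → 1 ≤ ‖v‖ := by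
  simp only [IsAdmissible, unitBall, interior_closedBall _ one_ne_zero, Set.subset_def,
    Set.mem_inter_iff, mem_ball_zero_iff, Set.mem_singleton_iff, and_imp, ne_eq]
  exact forall₂_congr fun v _ => by rw [not_imp_comm, not_le]

theorem critDet_le_abs_det {K : Set (Euc n)} {T : Euc n →ₗ[ℝ] Euc n} (hT : LinearMap.det T ≠ 0)
    (h : IsAdmissible (latticeSet T) K) : critDet K ≤ |LinearMap.det T| := by
  refine csInf_le ⟨0, ?_⟩ ⟨latticeSet T, ⟨T, hT, rfl⟩, h, (latDet_latticeSet hT).symm⟩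
  rintro _ ⟨Λ, -, -, rfl⟩
  exact latDet_nonneg Λ

theorem pow_mul_critDet_unitBall_le {T : Euc n →ₗ[ℝ] Euc n} (hT : LinearMap.det T ≠ 0) {r : ℝ}
    (hr : 0 < r) (h : ∀ v ∈ latticeSet T, v ≠ 0 → r ≤ ‖v‖) :
    r ^ n * critDet (unitBall n) ≤ |LinearMap.det T| := by
  have hdet : LinearMap.det (r⁻¹ • T) = (r ^ n)⁻¹ * LinearMap.det T := by
    rw [LinearMap.det_smul, finrank_euclideanSpace_fin, inv_pow]
  have hadm : IsAdmissible (latticeSet (r⁻¹ • T)) (unitBall n) := by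
    rw [isAdmissible_unitBall_iff, ← LinearMap.id_comp T, ← LinearMap.smul_comp, latticeSet_comp]
    rintro _ ⟨v, hv, rfl⟩ hv0
    have hrv : r ≤ ‖v‖ := h v hv (by rintro rfl; simp at hv0)
    simpa [norm_smul, abs_of_pos hr, inv_mul_eq_div, one_le_div hr] using hrv
  have hle := critDet_le_abs_det (by rw [hdet]; positivity) hadm
  rwa [hdet, abs_mul, abs_of_pos (by positivity), inv_mul_eq_div, le_div_iff₀' (by positivity)]
    at hle

theorem volume_le_two_pow_mul_abs_det {T : Euc n →ₗ[ℝ] Euc n} (hT : LinearMap.det T ≠ 0)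
    {s : Set (Euc n)} (hsymm : ∀ x ∈ s, -x ∈ s) (hconv : Convex ℝ s)
    (hs : ∀ v ∈ latticeSet T, v ∈ s → v = 0) :
    volume s ≤ ENNReal.ofReal (2 ^ n * |LinearMap.det T|) := by
  by_contra! hlt
  let b : Module.Basis (Fin n) ℝ (Euc n) := (stdBasis n).map (T.equivOfDetNeZero hT)
  have hb : ⇑b = T ∘ stdBasis n := rfl
  have hstd : volume.real (ZSpan.fundamentalDomain (stdBasis n)) = 1 := by
    rw [measureReal_congr (ZSpan.fundamentalDomain_ae_parallelepiped _ _), Measure.real, stdBasis,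
      OrthonormalBasis.coe_toBasis, OrthonormalBasis.volume_parallelepiped, ENNReal.toReal_one]
  have hvol : volume (ZSpan.fundamentalDomain b) = ENNReal.ofReal |LinearMap.det T| := by
    rw [← ofReal_measureReal (ZSpan.fundamentalDomain_isBounded b).measure_lt_top.ne,
      ZSpan.measureReal_fundamentalDomain b volume (stdBasis n), hstd, mul_one, hb,
      Module.Basis.det_comp, Module.Basis.det_self, mul_one]
  have hmul : volume (ZSpan.fundamentalDomain b) * 2 ^ Module.finrank ℝ (Euc n) =
      ENNReal.ofReal (2 ^ n * |LinearMap.det T|) := by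
    rw [hvol, finrank_euclideanSpace_fin, ENNReal.ofReal_mul (by positivity),
      ENNReal.ofReal_pow zero_le_two, ENNReal.ofReal_ofNat, mul_comm]
  have : Countable (Submodule.span ℤ (Set.range b)).toAddSubgroup :=
    inferInstanceAs (Countable (Submodule.span ℤ (Set.range b)))
  obtain ⟨x, hx0, hxs⟩ := exists_ne_zero_mem_lattice_of_measure_mul_two_pow_lt_measure
    (ZSpan.isAddFundamentalDomain' b volume) hsymm hconv (hmul.trans_lt hlt)
  have hxT : (x : Euc n) ∈ latticeSubmodule T := x.2
  exact hx0 (Subtype.ext (hs x (mem_latticeSubmodule.1 hxT) hxs))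

theorem volume_real_ball_le {T : Euc n →ₗ[ℝ] Euc n} (hT : LinearMap.det T ≠ 0) {r : ℝ}
    (hr : ∀ v ∈ latticeSet T, v ≠ 0 → r ≤ ‖v‖) :
    volume.real (ball (0 : Euc n) r) ≤ 2 ^ n * |LinearMap.det T| := by
  refine ENNReal.toReal_le_of_le_ofReal (by positivity)
    (volume_le_two_pow_mul_abs_det hT (fun x hx => by simpa using hx) (convex_ball 0 r) ?_)
  intro v hv hvr
  by_contra hv0
  exact (mem_ball_zero_iff.1 hvr).not_ge (hr v hv hv0)

theorem volume_real_ball_pos {r : ℝ} (hr : 0 < r) : 0 < volume.real (ball (0 : Euc n) r) :=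
  ENNReal.toReal_pos (measure_ball_pos volume 0 hr).ne' measure_ball_lt_top.ne

theorem exists_compression {F : Type*} [NormedAddCommGroup F] [InnerProductSpace ℝ F]
    [FiniteDimensional ℝ F] {u : F} (hu : ‖u‖ = 1) {δ : ℝ} (hδ : δ ≤ 1) :
    ∃ L : F →ₗ[ℝ] F, LinearMap.det L = δ ∧ (∀ x, ⟪u, x⟫ = 0 → L x = x) ∧
      ∀ x, δ * ‖x‖ ≤ ‖L x‖ := by
  refine ⟨LinearMap.transvection (innerₛₗ ℝ u) ((δ - 1) • u), ?_, fun x hx => ?_, fun x => ?_⟩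
  · simp [LinearMap.transvection.det, hu]
  · simp [LinearMap.transvection.apply, hx]
  · have hinner : |⟪u, x⟫| ≤ ‖x‖ := by simpa [hu] using abs_real_inner_le_norm u x
    have hL : LinearMap.transvection (innerₛₗ ℝ u) ((δ - 1) • u) x =
        x - ((1 - δ) * ⟪u, x⟫) • u := by
      simp only [LinearMap.transvection.apply, innerₛₗ_apply_apply]
      module
    calc δ * ‖x‖ ≤ ‖x‖ - (1 - δ) * |⟪u, x⟫| := by
          nlinarith [mul_le_mul_of_nonneg_left hinner (sub_nonneg.2 hδ)]
      _ = ‖x‖ - ‖((1 - δ) * ⟪u, x⟫) • u‖ := by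
          rw [norm_smul, hu, mul_one, Real.norm_eq_abs, abs_mul, abs_of_nonneg (sub_nonneg.2 hδ)]
      _ ≤ ‖LinearMap.transvection (innerₛₗ ℝ u) ((δ - 1) • u) x‖ := by
          rw [hL]
          exact norm_sub_norm_le _ _

/- If the short vectors spanned a proper subspace, compressing the space towards it would produce
a lattice violating Minkowski's theorem. -/
theorem exists_forall_span_latticeSet_eq_top {r : ℝ} (hr : 0 < r) (D : ℝ) :
    ∃ R : ℝ, ∀ T : Euc n →ₗ[ℝ] Euc n, LinearMap.det T ≠ 0 →
      (∀ v ∈ latticeSet T, v ≠ 0 → r ≤ ‖v‖) → |LinearMap.det T| ≤ D →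
      Submodule.span ℝ {v ∈ latticeSet T | ‖v‖ ≤ R} = ⊤ := by
  obtain ⟨δ, hδ, hδ1, hδD⟩ :
      ∃ δ > 0, δ ≤ 1 ∧ 2 ^ n * (δ * |D|) < volume.real (ball (0 : Euc n) r) := by
    obtain ⟨δ, hδ, hlt⟩ := exists_pos_mul_lt (volume_real_ball_pos (n := n) hr) (2 ^ n * |D|)
    refine ⟨min δ 1, by positivity, min_le_right _ _, lt_of_le_of_lt ?_ hlt⟩
    calc 2 ^ n * (min δ 1 * |D|) ≤ 2 ^ n * (δ * |D|) := by gcongr; exact min_le_left _ _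
      _ = 2 ^ n * |D| * δ := by ring
  refine ⟨r / δ, fun T hT hmin hD => ?_⟩
  by_contra hspan
  obtain ⟨w, hw, hw0⟩ := Submodule.exists_mem_ne_zero_of_ne_bot
    (mt (Submodule.orthogonal_eq_bot_iff).1 hspan)
  obtain ⟨L, hLdet, hLfix, hLnorm⟩ := exists_compression (norm_smul_inv_norm (𝕜 := ℝ) hw0) hδ1
  have hLT : LinearMap.det (L ∘ₗ T) = δ * LinearMap.det T := by rw [LinearMap.det_comp, hLdet]
  have hLmin : ∀ v ∈ latticeSet (L ∘ₗ T), v ≠ 0 → r ≤ ‖v‖ := by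
    rw [latticeSet_comp]
    rintro _ ⟨v, hv, rfl⟩ hLv0
    have hv0 : v ≠ 0 := by rintro rfl; exact hLv0 (map_zero L)
    by_contra! hlt
    have hshort : v ∈ {v ∈ latticeSet T | ‖v‖ ≤ r / δ} :=
      ⟨hv, (le_div_iff₀' hδ).2 ((hLnorm v).trans hlt.le)⟩
    have horth : ⟪w, v⟫ = 0 :=
      Submodule.inner_left_of_mem_orthogonal (Submodule.subset_span hshort) hw
    rw [hLfix v (by rw [real_inner_smul_left, horth, mul_zero])] at hlt
    exact hlt.not_ge (hmin v hv hv0)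
  refine hδD.not_ge ((volume_real_ball_le (by rw [hLT]; positivity) hLmin).trans ?_)
  rw [hLT, abs_mul, abs_of_pos hδ]
  gcongr 2 ^ n * (δ * ?_)
  exact hD.trans (le_abs_self D)

theorem exists_det_ne_zero_of_span_eq_top {s : Set (Euc n)} (hs : Submodule.span ℝ s = ⊤) :
    ∃ M : Euc n →ₗ[ℝ] Euc n, LinearMap.det M ≠ 0 ∧ ∀ i, M (stdBasis n i) ∈ s := by
  obtain ⟨f, hfs, hspan, hindep⟩ := Submodule.exists_fun_fin_finrank_span_eq ℝ s
  have hrank : n = Module.finrank ℝ (Submodule.span ℝ s) := by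
    rw [hs, finrank_top, finrank_euclideanSpace_fin]
  let b : Module.Basis (Fin n) ℝ (Euc n) :=
    (Module.Basis.mk hindep (hspan.trans hs).ge).reindex (finCongr hrank.symm)
  refine ⟨(stdBasis n).equiv b (Equiv.refl _), (LinearEquiv.isUnit_det' _).ne_zero, fun i => ?_⟩
  have hb : b i = f (finCongr hrank i) := by simp [b]
  simpa [hb] using hfs _

theorem exists_map_mem_latticeSet_of_ssubset {M T : Euc n →ₗ[ℝ] Euc n} (hM : LinearMap.det M ≠ 0)
    (h : latticeSet M ⊂ latticeSet T) :
    ∃ c : Euc n, c ≠ 0 ∧ M c ∈ latticeSet T ∧ ∀ i, |c i| ≤ 1 / 2 := by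
  obtain ⟨v, hvT, hvM⟩ := Set.exists_of_ssubset h
  let a : Euc n := (M.equivOfDetNeZero hM).symm v
  have hMa : M a = v := (M.equivOfDetNeZero hM).apply_symm_apply v
  let z : Euc n := ∑ i, (round (a i) : ℝ) • EuclideanSpace.single i 1
  have hz (i : Fin n) : z i = round (a i) := by simp [z, Pi.single_apply]
  have hMz : M z ∈ latticeSet M := ⟨fun i => round (a i), rfl⟩
  refine ⟨a - z, fun hc => hvM ?_, ?_, fun i => ?_⟩
  · rwa [← hMa, sub_eq_zero.1 hc]
  · rw [map_sub, hMa]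
    exact mem_latticeSubmodule.1 (sub_mem (mem_latticeSubmodule.2 hvT)
      (mem_latticeSubmodule.2 (h.subset hMz)))
  · rw [PiLp.sub_apply, hz]
    exact abs_sub_round (a i)

theorem norm_map_le_of_abs_le_one {M : Euc n →ₗ[ℝ] Euc n} {R : ℝ}
    (hR : ∀ i, ‖M (stdBasis n i)‖ ≤ R) {c : Euc n} (hc : ∀ i, |c i| ≤ 1) : ‖M c‖ ≤ n * R := by
  have hsum : M c = ∑ i, c i • M (stdBasis n i) := by
    conv_lhs => rw [← (stdBasis n).sum_repr c]
    simp only [map_sum, map_smul, stdBasis_repr]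
  calc ‖M c‖ ≤ ∑ i, ‖c i • M (stdBasis n i)‖ := hsum ▸ norm_sum_le _ _
    _ ≤ ∑ _i : Fin n, R := by
        refine Finset.sum_le_sum fun i _ => ?_
        rw [norm_smul, Real.norm_eq_abs]
        exact (mul_le_of_le_one_left (norm_nonneg _) (hc i)).trans (hR i)
    _ = n * R := by simp

/- Replacing the `l`-th basis vector by `M c` multiplies the determinant by `c l`. -/
theorem exists_two_mul_abs_det_le_of_ssubset {M T : Euc n →ₗ[ℝ] Euc n} (hM : LinearMap.det M ≠ 0)
    (h : latticeSet M ⊂ latticeSet T) {R : ℝ} (hR : ∀ i, ‖M (stdBasis n i)‖ ≤ R) :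
    ∃ M' : Euc n →ₗ[ℝ] Euc n, LinearMap.det M' ≠ 0 ∧ latticeSet M' ⊆ latticeSet T ∧
      2 * |LinearMap.det M'| ≤ |LinearMap.det M| ∧ ∀ i, ‖M' (stdBasis n i)‖ ≤ (n + 1) * R := by
  obtain ⟨c, hc0, hcT, hc⟩ := exists_map_mem_latticeSet_of_ssubset hM h
  obtain ⟨l, hl⟩ : ∃ l, c l ≠ 0 := by
    by_contra! hzero
    exact hc0 (PiLp.ext hzero)
  have hR0 : 0 ≤ R := (norm_nonneg _).trans (hR l)
  let N : Euc n →ₗ[ℝ] Euc n :=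
    LinearMap.transvection ((stdBasis n).coord l) (c - stdBasis n l)
  have hN_self : N (stdBasis n l) = c := by
    simp [N, LinearMap.transvection.apply]
  have hN_ne {i : Fin n} (hi : i ≠ l) : N (stdBasis n i) = stdBasis n i := by
    simp [N, LinearMap.transvection.apply, hi]
  have hdet : LinearMap.det (M ∘ₗ N) = LinearMap.det M * c l := by
    simp [N, LinearMap.det_comp, LinearMap.transvection.det, stdBasis_repr, stdBasis_apply]
  refine ⟨M ∘ₗ N, hdet ▸ mul_ne_zero hM hl, latticeSet_subset_iff.2 fun i => ?_, ?_, fun i => ?_⟩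
  · rcases eq_or_ne i l with rfl | hi
    · rwa [LinearMap.comp_apply, hN_self]
    · rw [LinearMap.comp_apply, hN_ne hi]
      exact h.subset (map_stdBasis_mem_latticeSet M i)
  · rw [hdet, abs_mul]
    nlinarith [hc l, abs_nonneg (LinearMap.det M)]
  · rcases eq_or_ne i l with rfl | hi
    · rw [LinearMap.comp_apply, hN_self]
      linarith [norm_map_le_of_abs_le_one hR fun i => (hc i).trans one_half_lt_one.le]
    · rw [LinearMap.comp_apply, hN_ne hi]
      nlinarith [hR i, mul_nonneg n.cast_nonneg hR0]

theorem exists_latticeSet_eq_of_abs_det_lt {T : Euc n →ₗ[ℝ] Euc n} (j : ℕ) {R : ℝ} (hR0 : 0 ≤ R)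
    {M : Euc n →ₗ[ℝ] Euc n} (hM : LinearMap.det M ≠ 0) (hsub : latticeSet M ⊆ latticeSet T)
    (hR : ∀ i, ‖M (stdBasis n i)‖ ≤ R)
    (hj : |LinearMap.det M| < 2 ^ j * |LinearMap.det T|) :
    ∃ T' : Euc n →ₗ[ℝ] Euc n, latticeSet T' = latticeSet T ∧
      ∀ i, ‖T' (stdBasis n i)‖ ≤ (n + 1) ^ j * R := by
  induction j generalizing M R with
  | zero =>
    obtain ⟨k, hk⟩ := exists_det_eq_mul_intCast hsub
    have hk1 : (1 : ℝ) ≤ |(k : ℝ)| := by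
      exact_mod_cast Int.one_le_abs (by rintro rfl; simp [hk] at hM)
    rw [pow_zero, one_mul, hk, abs_mul] at hj
    exact absurd (le_mul_of_one_le_right (abs_nonneg _) hk1) hj.not_ge
  | succ j ih =>
    rcases hsub.eq_or_ssubset with heq | hssub
    · refine ⟨M, heq, fun i => (hR i).trans (le_mul_of_one_le_left hR0 ?_)⟩
      exact one_le_pow₀ (by linarith [n.cast_nonneg (α := ℝ)])
    · obtain ⟨M', hM', hsub', hdet, hcols⟩ := exists_two_mul_abs_det_le_of_ssubset hM hssub hR
      obtain ⟨T', hT', hbound⟩ := ih (by positivity) hM' hsub' hcols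
        (by rw [pow_succ] at hj; linarith)
      exact ⟨T', hT', fun i => (hbound i).trans_eq (by ring)⟩

theorem exists_forall_abs_det_le (F : Type*) [NormedAddCommGroup F] [NormedSpace ℝ F]
    [FiniteDimensional ℝ F] (R : ℝ) : ∃ B : ℝ, ∀ M : F →L[ℝ] F, ‖M‖ ≤ R → |M.det| ≤ B := by
  obtain ⟨B, hB⟩ := (isCompact_closedBall (0 : F →L[ℝ] F) R).exists_bound_of_continuousOn
    ContinuousLinearMap.continuous_det.continuousOn
  exact ⟨B, fun M hM => hB M (mem_closedBall_zero_iff.2 hM)⟩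

/-- The quantitative core of **Mahler's selection theorem**. -/
theorem exists_latticeSet_eq_and_norm_le {r : ℝ} (hr : 0 < r) (D : ℝ) :
    ∃ R : ℝ, ∀ T : Euc n →ₗ[ℝ] Euc n, LinearMap.det T ≠ 0 →
      (∀ v ∈ latticeSet T, v ≠ 0 → r ≤ ‖v‖) → |LinearMap.det T| ≤ D →
      ∃ T' : Euc n →L[ℝ] Euc n, latticeSet (T' : Euc n →ₗ[ℝ] Euc n) = latticeSet T ∧
        ‖T'‖ ≤ R := by
  obtain ⟨R, hspan⟩ := exists_forall_span_latticeSet_eq_top (n := n) hr D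
  obtain ⟨C, _, hopNorm⟩ := (stdBasis n).exists_opNorm_le (F := Euc n)
  obtain ⟨B, hB⟩ := exists_forall_abs_det_le (Euc n) (C * max R 0)
  obtain ⟨j, hj⟩ :=
    pow_unbounded_of_one_lt (B * 2 ^ n / volume.real (ball (0 : Euc n) r)) one_lt_two
  refine ⟨C * ((n + 1) ^ j * max R 0), fun T hT hmin hD => ?_⟩
  obtain ⟨M, hM, hMs⟩ := exists_det_ne_zero_of_span_eq_top (hspan T hT hmin hD)
  have hMR i : ‖M (stdBasis n i)‖ ≤ max R 0 := (hMs i).2.trans (le_max_left _ _)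
  have hMB : |LinearMap.det M| ≤ B :=
    hB (LinearMap.toContinuousLinearMap M) (hopNorm (le_max_right _ _) hMR)
  have hMT : |LinearMap.det M| < 2 ^ j * |LinearMap.det T| := by
    rw [div_lt_iff₀ (volume_real_ball_pos hr)] at hj
    refine hMB.trans_lt (lt_of_mul_lt_mul_right (hj.trans_le ?_) (by positivity : (0 : ℝ) ≤ 2 ^ n))
    rw [mul_assoc, mul_comm |LinearMap.det T|]
    gcongr
    exact volume_real_ball_le hT hmin
  obtain ⟨T', hT', hcols⟩ := exists_latticeSet_eq_of_abs_det_lt j (le_max_right R 0) hM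
    (latticeSet_subset_iff.2 fun i => (hMs i).1) hMR hMT
  exact ⟨LinearMap.toContinuousLinearMap T', hT', hopNorm (by positivity) hcols⟩

end Lattices

section CriticalLattices

variable {n : ℕ}

theorem IsCriticalLattice.critDet_pos {Λ K : Set (Euc n)} (h : IsCriticalLattice Λ K) :
    0 < critDet K := by
  obtain ⟨⟨T, hT, rfl⟩, -, hdet⟩ := h
  rw [← hdet, latDet_latticeSet hT]
  positivity

theorem IsCriticalLattice.norm_eq_one_of_mem_minVecs (hn : n ≠ 0) {Λ : Set (Euc n)}
    (h : IsCriticalLattice Λ (unitBall n)) {y : Euc n} (hy : y ∈ minVecs Λ) : ‖y‖ = 1 := by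
  have hpos := h.critDet_pos
  obtain ⟨⟨T, hT, rfl⟩, hadm, hdet⟩ := h
  rw [latDet_latticeSet hT] at hdet
  have hmin : ∀ v ∈ latticeSet T, v ≠ 0 → ‖y‖ ≤ ‖v‖ := fun v hv hv0 => by
    refine le_of_sq_le_sq ?_ (norm_nonneg v)
    rw [hy.2.2]
    refine csInf_le ⟨0, ?_⟩ ⟨v, hv, hv0, rfl⟩
    rintro _ ⟨w, -, -, rfl⟩
    positivity
  have hpow := pow_mul_critDet_unitBall_le hT (norm_pos_iff.2 hy.2.1) hmin
  rw [hdet, mul_le_iff_le_one_left hpos, pow_le_one_iff_of_nonneg (norm_nonneg y) hn] at hpow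
  exact hpow.antisymm (isAdmissible_unitBall_iff.1 hadm y hy.1 hy.2.1)

theorem isCriticalLattice_unitBall_of_abs_det_le {T : Euc n →ₗ[ℝ] Euc n}
    (hT : LinearMap.det T ≠ 0) (hmin : ∀ v ∈ latticeSet T, v ≠ 0 → 1 ≤ ‖v‖)
    (hdet : |LinearMap.det T| ≤ critDet (unitBall n)) :
    IsCriticalLattice (latticeSet T) (unitBall n) :=
  have hadm := isAdmissible_unitBall_iff.2 hmin
  ⟨⟨T, hT, rfl⟩, hadm, (latDet_latticeSet hT).trans (hdet.antisymm (critDet_le_abs_det hT hadm))⟩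

theorem forall_mem_latticeSet_le_norm_iff {T : Euc n →ₗ[ℝ] Euc n} (hT : LinearMap.det T ≠ 0)
    {r : ℝ} : (∀ v ∈ latticeSet T, v ≠ 0 → r ≤ ‖v‖) ↔
      ∀ x ∈ latticeSet (LinearMap.id : Euc n →ₗ[ℝ] Euc n), x ≠ 0 → r ≤ ‖T x‖ := by
  have hT0 (x : Euc n) : T x = 0 ↔ x = 0 := (T.equivOfDetNeZero hT).map_eq_zero_iff
  rw [← LinearMap.comp_id T, latticeSet_comp, Set.forall_mem_image]
  simp only [LinearMap.comp_id, ne_eq, hT0]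

/-- Bases, encoded as linear maps, with norm at most `R` and determinant between `c` and `D` of
lattices with no nonzero vector shorter than `r`. The condition on the vectors is imposed on the
images of integer vectors, which makes the set visibly closed. -/
def latticeBases (n : ℕ) (R c D r : ℝ) : Set (Euc n →L[ℝ] Euc n) :=
  {T | ‖T‖ ≤ R ∧ |T.det| ∈ Set.Icc c D ∧
    ∀ x ∈ latticeSet (LinearMap.id : Euc n →ₗ[ℝ] Euc n), x ≠ 0 → r ≤ ‖T x‖}

theorem isCompact_latticeBases (n : ℕ) (R c D r : ℝ) : IsCompact (latticeBases n R c D r) := by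
  refine (isCompact_closedBall (0 : Euc n →L[ℝ] Euc n) R).of_isClosed_subset ?_
    fun T hT => mem_closedBall_zero_iff.2 hT.1
  have hmin : IsClosed {T : Euc n →L[ℝ] Euc n |
      ∀ x ∈ latticeSet (LinearMap.id : Euc n →ₗ[ℝ] Euc n), x ≠ 0 → r ≤ ‖T x‖} := by
    simp only [Set.ofPred_forall]
    exact isClosed_biInter fun x _ => isClosed_iInter fun _ =>
      isClosed_le continuous_const (by fun_prop)
  exact (isClosed_le continuous_norm continuous_const).inter
    ((isClosed_Icc.preimage ContinuousLinearMap.continuous_det.abs).inter hmin)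

theorem antitone_latticeBases (n : ℕ) (R c D : ℝ) : Antitone (latticeBases n R c D) :=
  fun _ _ hrs _ hT => ⟨hT.1, hT.2.1, fun x hx hx0 => hrs.trans (hT.2.2 x hx hx0)⟩

theorem eventually_exists_latticeSet_eq_image {P : Euc n →L[ℝ] Euc n} (hP : P.det ≠ 0)
    {Λ : Set (Euc n)} {U : Euc n ≃ₗᵢ[ℝ] Euc n}
    (hU : latticeSet (P : Euc n →ₗ[ℝ] Euc n) = U '' Λ) {η : ℝ} (hη : 0 < η) :
    ∀ᶠ T : Euc n →L[ℝ] Euc n in nhds P, ∃ A : Euc n →L[ℝ] Euc n,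
      ‖A.adjoint ∘L A - 1‖ ≤ η ∧ latticeSet (T : Euc n →ₗ[ℝ] Euc n) = A '' Λ := by
  obtain ⟨Q, hPQ⟩ : ∃ Q : Euc n →L[ℝ] Euc n, ∀ x, P (Q x) = U x :=
    let e := P.toContinuousLinearEquivOfDetNeZero hP
    ⟨(e.symm : Euc n →L[ℝ] Euc n) ∘L (U : Euc n →L[ℝ] Euc n), fun x => e.apply_symm_apply (U x)⟩
  have hQ : Q '' Λ = latticeSet LinearMap.id := by
    have hinj : Function.Injective P := (LinearMap.equivOfDetNeZero _ hP).injective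
    refine hinj.image_injective ?_
    simp only [Set.image_image, hPQ, ← hU]
    exact latticeSet_comp (P : Euc n →ₗ[ℝ] Euc n) LinearMap.id
  have hadj : (P ∘L Q).adjoint ∘L (P ∘L Q) = 1 :=
    (ContinuousLinearMap.norm_map_iff_adjoint_comp_self _).1 fun x =>
      (congrArg norm (hPQ x)).trans (U.norm_map x)
  have hcont : Continuous fun T : Euc n →L[ℝ] Euc n =>
      ‖(T ∘L Q).adjoint ∘L (T ∘L Q) - 1‖ := by fun_prop
  have hlim := hcont.tendsto' P 0 (by rw [hadj, sub_self, norm_zero])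
  filter_upwards [hlim.eventually_le_const hη] with T hT
  refine ⟨T ∘L Q, hT, ?_⟩
  rw [ContinuousLinearMap.coe_comp, Set.image_comp, hQ]
  exact latticeSet_comp (T : Euc n →ₗ[ℝ] Euc n) LinearMap.id

/-- `Λ` is a critical lattice of `K`, and up to rotation the only one. -/
def IsUniqueCriticalLattice (Λ K : Set (Euc n)) : Prop :=
  IsCriticalLattice Λ K ∧ ∀ Λ', IsCriticalLattice Λ' K → ∃ U : Euc n ≃ₗᵢ[ℝ] Euc n, Λ' = U '' Λ

theorem IsUniqueCriticalLattice.exists_latticeSet_eq_image {Λ : Set (Euc n)}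
    (h : IsUniqueCriticalLattice Λ (unitBall n)) {η : ℝ} (hη : 0 < η) :
    ∃ r < 1, ∀ T : Euc n →ₗ[ℝ] Euc n, LinearMap.det T ≠ 0 →
      (∀ v ∈ latticeSet T, v ≠ 0 → r ≤ ‖v‖) → |LinearMap.det T| ≤ critDet (unitBall n) →
      ∃ A : Euc n →L[ℝ] Euc n, ‖A.adjoint ∘L A - 1‖ ≤ η ∧ latticeSet T = A '' Λ := by
  have hpos := h.1.critDet_pos
  set D := critDet (unitBall n)
  obtain ⟨R, hR⟩ := exists_latticeSet_eq_and_norm_le (n := n) one_half_pos D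
  let c : ℝ := (1 / 2) ^ n * D
  have hc : 0 < c := by positivity
  let bases (r : Set.Iio (1 : ℝ)) : Set (Euc n →L[ℝ] Euc n) := latticeBases n R c D r
  let near : Set (Euc n →L[ℝ] Euc n) := {T | ∃ A : Euc n →L[ℝ] Euc n,
    ‖A.adjoint ∘L A - 1‖ ≤ η ∧ latticeSet (T : Euc n →ₗ[ℝ] Euc n) = A '' Λ}
  have hnear : ∀ P ∈ ⋂ r, bases r, near ∈ nhds P := fun P hP => by
    have hP' := Set.mem_iInter.1 hP
    have hdet := (hP' ⟨0, zero_lt_one (α := ℝ)⟩).2.1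
    have hP0 : P.det ≠ 0 := abs_pos.1 (hc.trans_le hdet.1)
    have hmin := (forall_mem_latticeSet_le_norm_iff hP0).2 fun x hx hx0 =>
      le_of_forall_lt_imp_le_of_dense fun r hr => (hP' ⟨r, hr⟩).2.2 x hx hx0
    obtain ⟨U, hU⟩ := h.2 _ (isCriticalLattice_unitBall_of_abs_det_le hP0 hmin hdet.2)
    exact eventually_exists_latticeSet_eq_image hP0 hU hη
  have hcompact (r) : IsCompact (bases r) := isCompact_latticeBases n R c D r
  have hanti : Antitone bases := fun _ _ hrs => antitone_latticeBases n R c D hrs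
  obtain ⟨⟨r, hr⟩, hsub⟩ := exists_subset_nhds_of_isCompact' hanti.directed_ge hcompact
    (fun r => (hcompact r).isClosed) hnear
  refine ⟨max r (1 / 2), max_lt hr one_half_lt_one, fun T hT hmin hdet => ?_⟩
  have hmin' := fun v hv hv0 => (le_max_right r (1 / 2)).trans (hmin v hv hv0)
  obtain ⟨T', hT', hnorm⟩ := hR T hT hmin' hdet
  have hdet' : |T'.det| = |LinearMap.det T| := abs_det_eq_of_latticeSet_eq hT hT'
  have hT'0 : T'.det ≠ 0 := by rwa [← abs_ne_zero, hdet', abs_ne_zero]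
  rw [← hT'] at hmin ⊢
  refine hsub ⟨hnorm, ?_, fun x hx hx0 => ?_⟩
  · rw [hdet']
    exact ⟨pow_mul_critDet_unitBall_le hT one_half_pos hmin', hdet⟩
  · exact (le_max_left _ _).trans ((forall_mem_latticeSet_le_norm_iff hT'0).1 hmin x hx hx0)

end CriticalLattices

section DentedBall

open scoped Pointwise

variable {F : Type*} [NormedAddCommGroup F] [InnerProductSpace ℝ F] {x : F} {c ε : ℝ}

/-- The unit ball with the opposite caps `c < |⟪x, y⟫|` pressed in by an amount of order `ε`. It is
a sublevel set of a convex function, so that its convexity is automatic. -/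
def dentedBall (x : F) (c ε : ℝ) : Set F :=
  {y | ‖y‖ + ε * max 0 (|⟪x, y⟫| - c) ≤ 1}

theorem continuous_norm_add_mul_max (x : F) (c ε : ℝ) :
    Continuous fun y => ‖y‖ + ε * max 0 (|⟪x, y⟫| - c) := by
  fun_prop

theorem convex_dentedBall (x : F) (c : ℝ) (hε : 0 ≤ ε) : Convex ℝ (dentedBall x c ε) := by
  have habs : ConvexOn ℝ Set.univ fun y => |⟪x, y⟫| :=
    (convexOn_norm convex_univ).comp_linearMap (innerₛₗ ℝ x)
  have hmax : ConvexOn ℝ Set.univ fun y => max 0 (|⟪x, y⟫| - c) :=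
    (convexOn_const 0 convex_univ).sup (habs.add_const (-c))
  simpa [dentedBall] using ((convexOn_norm convex_univ).add (hmax.smul hε)).convex_le 1

theorem isClosed_dentedBall (x : F) (c ε : ℝ) : IsClosed (dentedBall x c ε) :=
  isClosed_le (continuous_norm_add_mul_max x c ε) continuous_const

theorem neg_dentedBall (x : F) (c ε : ℝ) : -dentedBall x c ε = dentedBall x c ε := by
  ext y
  simp [dentedBall]

theorem dentedBall_subset_closedBall (x : F) (c : ℝ) (hε : 0 ≤ ε) :
    dentedBall x c ε ⊆ closedBall 0 1 := fun y hy => by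
  rw [mem_closedBall_zero_iff]
  exact (le_add_of_nonneg_right (by positivity)).trans hy

theorem max_abs_inner_sub_le_norm (hx : ‖x‖ = 1) (hc : 0 ≤ c) (y : F) :
    max 0 (|⟪x, y⟫| - c) ≤ ‖y‖ := by
  have hinner : |⟪x, y⟫| ≤ ‖y‖ := by simpa [hx] using abs_real_inner_le_norm x y
  exact max_le (norm_nonneg y) (by linarith)

theorem closedBall_subset_dentedBall (hx : ‖x‖ = 1) (hc : 0 ≤ c) (hε : 0 ≤ ε) :
    closedBall 0 (1 - ε) ⊆ dentedBall x c ε := fun y hy => by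
  rw [mem_closedBall_zero_iff] at hy
  calc ‖y‖ + ε * max 0 (|⟪x, y⟫| - c) ≤ ‖y‖ + ε * ‖y‖ := by
        gcongr
        exact max_abs_inner_sub_le_norm hx hc y
    _ ≤ 1 := by nlinarith

theorem one_le_of_notMem_interior_dentedBall {v : F} (hv : v ∉ interior (dentedBall x c ε)) :
    1 ≤ ‖v‖ + ε * max 0 (|⟪x, v⟫| - c) := by
  by_contra! hlt
  exact hv (interior_maximal (fun y hy => le_of_lt hy)
    (isOpen_lt (continuous_norm_add_mul_max x c ε) continuous_const) hlt)

theorem one_sub_le_norm_of_notMem_interior_dentedBall (hx : ‖x‖ = 1) (hc : 0 ≤ c) (hε : 0 ≤ ε)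
    {v : F} (hv : v ∉ interior (dentedBall x c ε)) : 1 - ε ≤ ‖v‖ := by
  rcases le_total 1 ‖v‖ with hge | hle
  · linarith
  · have hmax := (max_abs_inner_sub_le_norm hx hc v).trans hle
    linarith [one_le_of_notMem_interior_dentedBall hv, mul_le_of_le_one_right hε hmax]

theorem lt_abs_inner_of_notMem_interior_dentedBall {v : F}
    (hv : v ∉ interior (dentedBall x c ε)) (hv1 : ‖v‖ < 1) : c < |⟪x, v⟫| := by
  by_contra! hle
  have hone := one_le_of_notMem_interior_dentedBall hv
  rw [max_eq_left (sub_nonpos.2 hle), mul_zero, add_zero] at hone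
  exact hone.not_gt hv1

theorem hausdorffDist_dentedBall_le (hx : ‖x‖ = 1) (hc : 0 ≤ c) (hε : 0 ≤ ε) (hε1 : ε ≤ 1) :
    hausdorffDist (dentedBall x c ε) (closedBall 0 1) ≤ ε := by
  refine hausdorffDist_le_of_mem_dist hε (fun y hy => ?_) fun y hy => ?_
  · exact ⟨y, dentedBall_subset_closedBall x c hε hy, by rwa [dist_self]⟩
  · rw [mem_closedBall_zero_iff] at hy
    refine ⟨(1 - ε) • y, closedBall_subset_dentedBall hx hc hε ?_, ?_⟩
    · rw [mem_closedBall_zero_iff, norm_smul, Real.norm_of_nonneg (sub_nonneg.2 hε1)]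
      exact mul_le_of_le_one_right (sub_nonneg.2 hε1) hy
    · have hdiff : y - (1 - ε) • y = ε • y := by module
      rw [dist_eq_norm, hdiff, norm_smul, Real.norm_of_nonneg hε]
      exact mul_le_of_le_one_right hε hy

theorem sq_norm_sub_lt_or_sq_norm_add_lt (hx : ‖x‖ = 1) (hc : 0 ≤ c) {p q : F} (hp : ‖p‖ < 1)
    (hq : ‖q‖ < 1) (hxp : c < |⟪x, p⟫|) (hxq : c < |⟪x, q⟫|) :
    ‖p - q‖ ^ 2 < 4 * (1 - c ^ 2) ∨ ‖p + q‖ ^ 2 < 4 * (1 - c ^ 2) := by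
  have hadd : |⟪x, p⟫ + ⟪x, q⟫| ≤ ‖p + q‖ := by
    simpa [hx, inner_add_right] using abs_real_inner_le_norm x (p + q)
  have hsub : |⟪x, p⟫ - ⟪x, q⟫| ≤ ‖p - q‖ := by
    simpa [hx, inner_sub_right] using abs_real_inner_le_norm x (p - q)
  have hlarge : 2 * c < ‖p + q‖ ∨ 2 * c < ‖p - q‖ := by grind
  have hpar : ‖p + q‖ ^ 2 + ‖p - q‖ ^ 2 < 4 := by
    have hp2 : ‖p‖ ^ 2 < 1 := pow_lt_one₀ (norm_nonneg p) hp two_ne_zero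
    have hq2 : ‖q‖ ^ 2 < 1 := pow_lt_one₀ (norm_nonneg q) hq two_ne_zero
    linarith [parallelogram_law_with_norm ℝ p q, sq ‖p + q‖, sq ‖p - q‖, sq ‖p‖, sq ‖q‖]
  rcases hlarge with h | h
  · left
    nlinarith
  · right
    nlinarith

/-- The part of the unit ball within a cone about `x`. -/
def ballSector (x : F) (c : ℝ) : Set F :=
  {y | ‖y‖ ≤ 1 ∧ c * ‖y‖ ≤ ⟪x, y⟫}

theorem isClosed_ballSector (x : F) (c : ℝ) : IsClosed (ballSector x c) :=
  (isClosed_le continuous_norm continuous_const).inter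
    (isClosed_le (continuous_const.mul continuous_norm) (continuous_const.inner continuous_id))

theorem isBounded_ballSector (x : F) (c : ℝ) : Bornology.IsBounded (ballSector x c) :=
  isBounded_closedBall.subset fun _ hy => mem_closedBall_zero_iff.2 hy.1

theorem dentedBall_subset_union_smul_ballSector {c' : ℝ} (hc : 0 ≤ c) (hc' : 0 ≤ c')
    (hε : 0 ≤ ε) :
    dentedBall x c ε ⊆ closedBall 0 1 \ ballSector x c' ∪
      ((1 + c * ε) / (1 + c' * ε)) • ballSector x c' := fun y hy => by
  have hy1 := dentedBall_subset_closedBall x c hε hy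
  by_cases hysec : y ∉ ballSector x c'
  · exact Or.inl ⟨hy1, hysec⟩
  rw [not_not] at hysec
  right
  have hcap : ‖y‖ + ε * (c' * ‖y‖ - c) ≤ 1 := le_trans (by
    gcongr
    exact (sub_le_sub_right (hysec.2.trans (le_abs_self _)) c).trans (le_max_right _ _)) hy
  have hr : 0 < (1 + c * ε) / (1 + c' * ε) := by positivity
  rw [Set.mem_smul_set_iff_inv_smul_mem₀ hr.ne']
  refine ⟨?_, ?_⟩
  · rw [norm_smul, Real.norm_of_nonneg (inv_nonneg.2 hr.le), inv_mul_le_one₀ hr,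
      le_div_iff₀ (by positivity)]
    linarith
  · rw [norm_smul, Real.norm_of_nonneg (inv_nonneg.2 hr.le), real_inner_smul_right,
      mul_left_comm]
    exact mul_le_mul_of_nonneg_left hysec.2 (inv_nonneg.2 hr.le)

variable [FiniteDimensional ℝ F] [MeasurableSpace F] [BorelSpace F]

theorem volume_real_ballSector_pos (hx : ‖x‖ = 1) (hc : c < 1) :
    0 < volume.real (ballSector x c) := by
  let U : Set F := {y | ‖y‖ < 1 ∧ c * ‖y‖ < ⟪x, y⟫}
  have hopen : IsOpen U := (isOpen_lt continuous_norm continuous_const).inter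
    (isOpen_lt (continuous_const.mul continuous_norm) (continuous_const.inner continuous_id))
  have hmem : (2⁻¹ : ℝ) • x ∈ U := by
    rw [Set.mem_ofPred_eq, norm_smul, real_inner_smul_right, real_inner_self_eq_norm_sq, hx]
    norm_num
    linarith
  have hsub : U ⊆ ballSector x c := fun y hy => ⟨hy.1.le, hy.2.le⟩
  exact ENNReal.toReal_pos ((hopen.measure_pos volume ⟨_, hmem⟩).trans_le (measure_mono hsub)).ne'
    (isBounded_ballSector x c).measure_lt_top.ne

theorem volume_real_dentedBall_le {c' : ℝ} (hc : 0 ≤ c) (hc' : 0 ≤ c') (hε : 0 ≤ ε) :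
    volume.real (dentedBall x c ε) ≤ volume.real (closedBall (0 : F) 1) -
      (1 - ((1 + c * ε) / (1 + c' * ε)) ^ Module.finrank ℝ F) *
        volume.real (ballSector x c') := by
  let r := (1 + c * ε) / (1 + c' * ε)
  have hr : 0 ≤ r := by positivity
  have hsmul : volume.real (r • ballSector x c') =
      r ^ Module.finrank ℝ F * volume.real (ballSector x c') := by
    rw [Measure.real, Measure.addHaar_smul_of_nonneg volume hr, ENNReal.toReal_mul,
      ENNReal.toReal_ofReal (by positivity), Measure.real]
  have hdiff : volume.real (closedBall (0 : F) 1 \ ballSector x c') =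
      volume.real (closedBall (0 : F) 1) - volume.real (ballSector x c') :=
    measureReal_sdiff (fun y hy => mem_closedBall_zero_iff.2 hy.1)
      (isClosed_ballSector x c').measurableSet measure_closedBall_lt_top.ne
  have hfin : volume (closedBall (0 : F) 1 \ ballSector x c' ∪ r • ballSector x c') ≠ ⊤ :=
    ((isBounded_closedBall.subset Set.sdiff_subset).union
      ((isBounded_ballSector x c').smul₀ r)).measure_lt_top.ne
  calc volume.real (dentedBall x c ε)
      ≤ volume.real (closedBall (0 : F) 1 \ ballSector x c' ∪ r • ballSector x c') :=
        measureReal_mono (dentedBall_subset_union_smul_ballSector hc hc' hε) hfin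
    _ ≤ _ := measureReal_union_le _ _
    _ = _ := by rw [hdiff, hsmul]; ring

theorem exists_volume_real_dentedBall_add_le (hx : ‖x‖ = 1) (hc0 : 0 ≤ c) (hc1 : c < 1) :
    ∃ κ > 0, ∀ ε, 0 ≤ ε → ε ≤ 1 →
      volume.real (dentedBall x c ε) + κ * ε ≤ volume.real (closedBall (0 : F) 1) := by
  let c' := (1 + c) / 2
  have hc' : 0 ≤ c' := by positivity
  have hD : 0 < volume.real (ballSector x c') :=
    volume_real_ballSector_pos hx (by simp only [c']; linarith)
  refine ⟨(1 - c) / 4 * volume.real (ballSector x c'), mul_pos (by linarith) hD,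
    fun ε hε hε1 => ?_⟩
  let r := (1 + c * ε) / (1 + c' * ε)
  have hr : r ≤ 1 - (1 - c) / 4 * ε := by
    simp only [r, c']
    rw [div_le_iff₀ (by positivity)]
    nlinarith [mul_nonneg hε (sub_nonneg.2 hc1.le), mul_nonneg hε (sub_nonneg.2 hε1)]
  have : Nontrivial F := ⟨x, 0, by rw [← norm_ne_zero_iff, hx]; exact one_ne_zero⟩
  have hpow : r ^ Module.finrank ℝ F ≤ r :=
    pow_le_of_le_one (by positivity) (hr.trans (by nlinarith)) Module.finrank_pos.ne'
  nlinarith [volume_real_dentedBall_le (x := x) hc0 hc' hε]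

end DentedBall

section NearOptimality

open scoped Topology

variable {n : ℕ} {Λ K : Set (Euc n)} {x : Euc n} {c ε : ℝ}

theorem isSymCB_dentedBall (hx : ‖x‖ = 1) (hc : 0 ≤ c) (hε : 0 ≤ ε) (hε1 : ε < 1) :
    IsSymCB (dentedBall x c ε) where
  convex := convex_dentedBall x c hε
  compact := (isCompact_closedBall (0 : Euc n) 1).of_isClosed_subset (isClosed_dentedBall x c ε)
    (dentedBall_subset_closedBall x c hε)
  nonempty_interior := ⟨0, mem_interior_iff_mem_nhds.2 (Filter.mem_of_superset
    (closedBall_mem_nhds 0 (sub_pos.2 hε1)) (closedBall_subset_dentedBall hx hc hε))⟩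
  symm := neg_dentedBall x c ε

theorem IsAdmissible.notMem_interior (h : IsAdmissible Λ K) {v : Euc n} (hv : v ∈ Λ)
    (hv0 : v ≠ 0) : v ∉ interior K :=
  fun hvK => hv0 (h ⟨hv, hvK⟩)

theorem IsAdmissible.mono {K' : Set (Euc n)} (h : IsAdmissible Λ K) (hK : K' ⊆ K) :
    IsAdmissible Λ K' :=
  (Set.inter_subset_inter_right Λ (interior_mono hK)).trans h

theorem le_critDet (hK : ∃ Λ, IsLattice Λ ∧ IsAdmissible Λ K) {d : ℝ}
    (h : ∀ T : Euc n →ₗ[ℝ] Euc n, LinearMap.det T ≠ 0 → IsAdmissible (latticeSet T) K →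
      d ≤ |LinearMap.det T|) : d ≤ critDet K := by
  obtain ⟨Λ, hΛ, hadm⟩ := hK
  refine le_csInf ⟨_, Λ, hΛ, hadm, rfl⟩ ?_
  rintro _ ⟨_, ⟨T, hT, rfl⟩, hTadm, rfl⟩
  rw [latDet_latticeSet hT]
  exact h T hT hTadm

theorem eq_or_eq_neg_of_norm_lt_one (hx : ‖x‖ = 1) (hc : 0 ≤ c) (hε : 0 ≤ ε) (hε1 : ε ≤ 1)
    (hcε : 4 * (1 - c ^ 2) ≤ (1 - ε) ^ 2) {T : Euc n →ₗ[ℝ] Euc n}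
    (hT : IsAdmissible (latticeSet T) (dentedBall x c ε)) {v w : Euc n} (hv : v ∈ latticeSet T)
    (hw : w ∈ latticeSet T) (hv0 : v ≠ 0) (hw0 : w ≠ 0) (hv1 : ‖v‖ < 1) (hw1 : ‖w‖ < 1) :
    w = v ∨ w = -v := by
  have eq_zero_of_short : ∀ u ∈ latticeSubmodule T, ‖u‖ ^ 2 < 4 * (1 - c ^ 2) → u = 0 := by
    intro u hu hlt
    by_contra hu0
    have hlong := one_sub_le_norm_of_notMem_interior_dentedBall hx hc hε
      (hT.notMem_interior (mem_latticeSubmodule.1 hu) hu0)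
    exact (hlt.trans_le hcε).not_ge (pow_le_pow_left₀ (sub_nonneg.2 hε1) hlong 2)
  rw [← mem_latticeSubmodule] at hv hw
  rcases sq_norm_sub_lt_or_sq_norm_add_lt hx hc hw1 hv1
    (lt_abs_inner_of_notMem_interior_dentedBall
      (hT.notMem_interior (mem_latticeSubmodule.1 hw) hw0) hw1)
    (lt_abs_inner_of_notMem_interior_dentedBall
      (hT.notMem_interior (mem_latticeSubmodule.1 hv) hv0) hv1) with hsub | hadd
  · exact Or.inl (sub_eq_zero.1 (eq_zero_of_short _ (sub_mem hw hv) hsub))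
  · exact Or.inr (eq_neg_of_add_eq_zero_left (eq_zero_of_short _ (add_mem hw hv) hadd))

theorem IsCriticalLattice.abs_det_eq (h : IsCriticalLattice Λ K) {T A : Euc n →ₗ[ℝ] Euc n}
    (hT : LinearMap.det T ≠ 0) (hA : latticeSet T = A '' Λ) :
    |LinearMap.det T| = |LinearMap.det A| * critDet K := by
  obtain ⟨⟨P, hP, rfl⟩, -, hdet⟩ := h
  rw [← hdet, latDet_latticeSet hP, ← abs_mul, ← LinearMap.det_comp]
  rw [← latticeSet_comp] at hA
  exact (abs_det_eq_of_latticeSet_eq hT hA.symm).symm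

theorem IsUniqueCriticalLattice.exists_eventually_mul_critDet_le_abs_det (hn : n ≠ 0)
    (h : IsUniqueCriticalLattice Λ (unitBall n))
    (hS : IsRedundantlySemiEutacticCfg (minVecs Λ)) (hx : ‖x‖ = 1) (hc0 : 0 ≤ c)
    (hc : 3 / 4 < c ^ 2) :
    ∃ C ≥ 0, ∀ᶠ ε in 𝓝[>] (0 : ℝ), ∀ T : Euc n →ₗ[ℝ] Euc n, LinearMap.det T ≠ 0 →
      IsAdmissible (latticeSet T) (dentedBall x c ε) →
      (1 - C * ε ^ 2) * critDet (unitBall n) ≤ |LinearMap.det T| := by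
  have hpos := h.1.critDet_pos
  obtain ⟨C, hC, η, hη, hdet⟩ := hS.exists_one_sub_mul_sq_le_abs_det fun y hy =>
    h.1.norm_eq_one_of_mem_minVecs hn hy
  obtain ⟨r, hr, hclose⟩ := h.exists_latticeSet_eq_image hη
  have hsmall : ∀ᶠ ε in 𝓝[>] (0 : ℝ), r < 1 - ε ∧ 4 * (1 - c ^ 2) < (1 - ε) ^ 2 ∧ ε < 1 := by
    refine Filter.Eventually.filter_mono nhdsWithin_le_nhds
      (.and ?_ (.and ?_ (eventually_lt_nhds one_pos)))
    · exact ContinuousAt.eventually_lt (by fun_prop) (by fun_prop) (by simpa)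
    · exact ContinuousAt.eventually_lt (by fun_prop) (by fun_prop) (by linarith)
  refine ⟨C, hC, ?_⟩
  filter_upwards [hsmall, self_mem_nhdsWithin] with ε ⟨hrε, hcε, hε1⟩ (hε : 0 < ε) T hT hadm
  have hlong : ∀ v ∈ latticeSet T, v ≠ 0 → 1 - ε ≤ ‖v‖ := fun v hv hv0 =>
    one_sub_le_norm_of_notMem_interior_dentedBall hx hc0 hε.le (hadm.notMem_interior hv hv0)
  rcases le_total (critDet (unitBall n)) |LinearMap.det T| with hge | hle
  · exact (mul_le_of_le_one_left hpos.le (sub_le_self _ (by positivity))).trans hge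
  obtain ⟨A, hA, hTA⟩ := hclose T hT (fun v hv hv0 => hrε.le.trans (hlong v hv hv0)) hle
  have habs : |LinearMap.det T| = |A.det| * critDet (unitBall n) := h.1.abs_det_eq hT hTA
  have hdetA : A.det ≠ 0 := fun h0 => hT (by simpa [h0] using habs)
  have hinj : Function.Injective A :=
    LinearMap.ker_eq_bot.1 (not_not.1 (mt LinearMap.det_eq_zero_iff_ker_ne_bot.2 hdetA))
  have hmem : ∀ y ∈ minVecs Λ, A y ∈ latticeSet T ∧ A y ≠ 0 := fun y hy =>
    ⟨hTA ▸ Set.mem_image_of_mem A hy.1, (map_ne_zero_iff A hinj).2 hy.2.1⟩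
  rw [habs]
  refine mul_le_mul_of_nonneg_right (hdet A hA (fun y hy z hz hy1 hz1 => ?_) ε hε.le hε1.le
    fun y hy => hlong _ (hmem y hy).1 (hmem y hy).2) hpos.le
  simpa only [← map_neg, hinj.eq_iff] using eq_or_eq_neg_of_norm_lt_one hx hc0 hε.le hε1.le
    hcε.le hadm (hmem y hy).1 (hmem z hz).1 (hmem y hy).2 (hmem z hz).2 hy1 hz1

theorem IsUniqueCriticalLattice.exists_eventually_mul_critDet_le (hn : n ≠ 0)
    (h : IsUniqueCriticalLattice Λ (unitBall n))
    (hS : IsRedundantlySemiEutacticCfg (minVecs Λ)) (hx : ‖x‖ = 1) (hc0 : 0 ≤ c)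
    (hc : 3 / 4 < c ^ 2) :
    ∃ C ≥ 0, ∀ᶠ ε in 𝓝[>] (0 : ℝ),
      (1 - C * ε ^ 2) * critDet (unitBall n) ≤ critDet (dentedBall x c ε) := by
  obtain ⟨C, hC, hdet⟩ :=
    h.exists_eventually_mul_critDet_le_abs_det hn hS hx hc0 hc
  refine ⟨C, hC, ?_⟩
  filter_upwards [hdet, self_mem_nhdsWithin] with ε hdetε (hε : 0 < ε)
  exact le_critDet ⟨Λ, h.1.1, h.1.2.1.mono (dentedBall_subset_closedBall x c hε.le)⟩ hdetε

theorem IsUniqueCriticalLattice.eventually_packFrac_dentedBall_lt (hn : n ≠ 0)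
    (h : IsUniqueCriticalLattice Λ (unitBall n))
    (hS : IsRedundantlySemiEutacticCfg (minVecs Λ)) (hx : ‖x‖ = 1) (hc0 : 0 ≤ c) (hc1 : c < 1)
    (hc : 3 / 4 < c ^ 2) :
    ∀ᶠ ε in 𝓝[>] (0 : ℝ), packFrac (dentedBall x c ε) < packFrac (unitBall n) := by
  have hpos := h.1.critDet_pos
  obtain ⟨C, -, hdet⟩ := h.exists_eventually_mul_critDet_le hn hS hx hc0 hc
  obtain ⟨κ, hκ, hvol⟩ := exists_volume_real_dentedBall_add_le hx hc0 hc1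
  set V : ℝ := volume.real (closedBall (0 : Euc n) 1)
  have hsmall : ∀ᶠ ε in 𝓝[>] (0 : ℝ), C * ε ^ 2 < 1 ∧ V * C * ε < κ ∧ ε < 1 := by
    refine Filter.Eventually.filter_mono nhdsWithin_le_nhds
      (.and ?_ (.and ?_ (eventually_lt_nhds one_pos)))
    · exact ContinuousAt.eventually_lt (by fun_prop) (by fun_prop) (by simp)
    · exact ContinuousAt.eventually_lt (by fun_prop) (by fun_prop) (by simpa)
  filter_upwards [hdet, hsmall, self_mem_nhdsWithin] with ε hdetε ⟨hCε, hκε, hε1⟩ (hε : 0 < ε)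
  have hvol_lt : volume.real (dentedBall x c ε) < V * (1 - C * ε ^ 2) := by
    linarith [hvol ε hε.le hε1.le, mul_lt_mul_of_pos_right hκε hε]
  have hfactor : 0 < 1 - C * ε ^ 2 := sub_pos.2 hCε
  calc packFrac (dentedBall x c ε)
      ≤ volume.real (dentedBall x c ε) / (2 ^ n * ((1 - C * ε ^ 2) * critDet (unitBall n))) := by
        rw [packFrac, ← Measure.real]
        gcongr
    _ < V * (1 - C * ε ^ 2) / (2 ^ n * ((1 - C * ε ^ 2) * critDet (unitBall n))) := by gcongr
    _ = V / (2 ^ n * critDet (unitBall n)) := by field_simp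
    _ = packFrac (unitBall n) := rfl

end NearOptimality

/-- Theorem 3.6: if the critical lattice `Λ` of `Bⁿ` is unique up to
rotation and `S(Λ)` is redundantly semi-eutactic, then `Bⁿ` is not a local pessimum for
lattice packing. -/
theorem redundantly_semiEutactic_not_local_pessimum (n : ℕ) (hn : 2 ≤ n) (Λ : Set (Euc n))
    (hcrit : IsCriticalLattice Λ (unitBall n))
    (huniq : ∀ Λ' : Set (Euc n), IsCriticalLattice Λ' (unitBall n) →
      ∃ U : Euc n ≃ₗᵢ[ℝ] Euc n, Λ' = ⇑U '' Λ)
    (hext : IsExtremeCfg (minVecs Λ))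
    (hredsemi : ∀ x ∈ minVecs Λ, IsSemiEutacticCfg (minVecs Λ \ {x, -x})) :
    ∀ ε > (0 : ℝ), ∃ K : Set (Euc n), IsSymCB K ∧
      Metric.hausdorffDist K (unitBall n) < ε ∧
      packFrac K < packFrac (unitBall n) := by
  intro ε hε
  let x : Euc n := EuclideanSpace.single ⟨0, by lia⟩ 1
  have hx : ‖x‖ = 1 := by simp [x]
  have hc : (0 : ℝ) ≤ 7 / 8 := by norm_num
  have hΛ : IsUniqueCriticalLattice Λ (unitBall n) := ⟨hcrit, huniq⟩
  have hpack := hΛ.eventually_packFrac_dentedBall_lt (by lia) ⟨hext, hredsemi⟩ hx hc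
    (by norm_num) (by norm_num)
  obtain ⟨δ, hlt, hδ, hδε⟩ := (hpack.and (Ioo_mem_nhdsGT (lt_min hε one_pos))).exists
  obtain ⟨hδε, hδ1⟩ := lt_min_iff.1 hδε
  exact ⟨dentedBall x (7 / 8) δ, isSymCB_dentedBall hx hc hδ.le hδ1,
    (hausdorffDist_dentedBall_le hx hc hδ.le hδ1.le).trans_lt hδε, hlt⟩

end
end

section
/- For n ≥ 4, let S = {(σ e_i + τ e_j)/√2 : 1 ≤ i < j ≤ n, σ, τ ∈ {+1, −1}} ⊂ ℝ^n be the 2n(n−1) minimal vectors of the root lattice D_n. Then: (a) for every x₀ ∈ S there exist nonnegative coefficients υ_x ≥ 0 (x ∈ S) with υ_x = υ_{−x}, υ_{x₀} = υ_{−x₀} = 0, and Id = Σ_{x∈S} υ_x P_x (so S is redundantly semi-eutactic); but (b) for x₀ = (e_1 + e_2)/√2 there is no family of strictly positive coefficients υ_x > 0 (x ∈ S ∖ {x₀, −x₀}) with υ_x = υ_{−x} and Id = Σ_{x∈S∖{x₀,−x₀}} υ_x P_x (so S is not redundantly extreme). -/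
open scoped RealInnerProductSpace
open Metric MeasureTheory

noncomputable section

/-- The minimal vectors of the root lattice `Dₙ`:
`S = {(σeᵢ + τeⱼ)/√2 : i ≠ j, σ, τ ∈ {±1}} ⊂ ℝⁿ`. -/
def rootCfgD (n : ℕ) : Set (Euc n) :=
  {v | ∃ i j : Fin n, i ≠ j ∧ ∃ σ τ : ℝ, (σ = 1 ∨ σ = -1) ∧ (τ = 1 ∨ τ = -1) ∧
    v = (Real.sqrt 2)⁻¹ •
      (σ • EuclideanSpace.single i 1 + τ • EuclideanSpace.single j 1)}

/-! The parallelogram identity `P_{x+y} + P_{x-y} = 2 (P_x + P_y)` turns any permutation `π` of an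
orthonormal basis into the decomposition
`Id = ½ ∑ₖ (P_{(bₖ + b_{π k})/√2} + P_{(bₖ - b_{π k})/√2})`.
If `π` has no fixed point and does not match `i` with `j`, then all these vectors are minimal
vectors of `Dₙ` different from `±(σeᵢ + τeⱼ)/√2`; a long enough cycle visiting `i` and `j` at
distance two is such a `π`. This gives (a).

For (b), evaluate `Id = ∑ υ_x P_x` at the matrix entry `(i, j)`: it reads `0 = ∑ υ_x x_i x_j`. The
only minimal vectors with `x_i x_j ≠ 0` are `(±eᵢ ± eⱼ)/√2`, and once `±x₀` is removed the
products that remain all have the same sign, so the weight of the orthogonal pair has to vanish. -/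

section RankOne

variable {F : Type*} [NormedAddCommGroup F] [InnerProductSpace ℝ F]

lemma projMap_apply (x y : F) : projMap x y = ⟪y, x⟫ • x := rfl

lemma projMap_neg (x : F) : projMap (-x) = projMap x := by
  ext y
  simp [projMap_apply]

lemma projMap_smul (a : ℝ) (x : F) : projMap (a • x) = a ^ 2 • projMap x := by
  ext y
  simp only [projMap_apply, LinearMap.smul_apply, real_inner_smul_right]
  module

lemma projMap_add_add_projMap_sub (x y : F) :
    projMap (x + y) + projMap (x - y) = (2 : ℝ) • (projMap x + projMap y) := by
  ext z
  simp only [projMap_apply, LinearMap.add_apply, LinearMap.smul_apply, inner_add_right,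
    inner_sub_right]
  module

lemma sum_projMap_orthonormalBasis {ι : Type*} [Fintype ι] (b : OrthonormalBasis ι ℝ F) :
    ∑ i, projMap (b i) = LinearMap.id := by
  ext y
  simpa [projMap_apply, real_inner_comm] using b.sum_repr' y

lemma sum_projMap_orthonormalBasis_perm {ι : Type*} [Fintype ι] (b : OrthonormalBasis ι ℝ F)
    (π : Equiv.Perm ι) :
    ∑ k, (2⁻¹ : ℝ) • (projMap ((√2)⁻¹ • (b k + b (π k))) + projMap ((√2)⁻¹ • (b k - b (π k)))) =
      LinearMap.id := by
  have hterm (k : ι) : (2⁻¹ : ℝ) • (projMap ((√2)⁻¹ • (b k + b (π k))) +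
      projMap ((√2)⁻¹ • (b k - b (π k)))) = (2⁻¹ : ℝ) • (projMap (b k) + projMap (b (π k))) := by
    rw [projMap_smul, projMap_smul, ← smul_add, projMap_add_add_projMap_sub, smul_smul (_ ^ 2)]
    simp
  simp_rw [hterm, ← Finset.smul_sum, Finset.sum_add_distrib,
    Equiv.sum_comp π fun k => projMap (b k), sum_projMap_orthonormalBasis]
  module

end RankOne

lemma finsum_smul_eq_linearCombination {R α M : Type*} [Semiring R] [AddCommMonoid M] [Module R M]
    (f : α → M) (w : α →₀ R) : ∑ᶠ x, w x • f x = Finsupp.linearCombination R f w := by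
  rw [Finsupp.linearCombination_apply, Finsupp.sum]
  refine finsum_eq_sum_of_support_subset _ fun x hx => ?_
  simpa using left_ne_zero_of_smul hx

section SymmWeight

variable {ι E : Type*} [Fintype ι] [AddCommGroup E] (v : ι → E)

/-- The weight on `E` carried by a finite family `v` with coefficients `c`, symmetrised under
`x ↦ -x` by splitting each `c i` evenly between `v i` and `-v i`. -/
def symmWeight (c : ι → ℝ) : E →₀ ℝ :=
  ∑ i, (Finsupp.single (v i) (c i / 2) + Finsupp.single (-v i) (c i / 2))

lemma symmWeight_nonneg {c : ι → ℝ} (hc : ∀ i, 0 ≤ c i) (x : E) : 0 ≤ symmWeight v c x := by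
  have hw : 0 ≤ symmWeight v c := Finset.sum_nonneg fun i _ =>
    have hci : 0 ≤ c i / 2 := div_nonneg (hc i) zero_le_two
    add_nonneg (Finsupp.single_nonneg.2 hci) (Finsupp.single_nonneg.2 hci)
  exact hw x

lemma symmWeight_eq_zero (c : ι → ℝ) {x : E} (hx : ∀ i, v i ≠ x) (hx' : ∀ i, -v i ≠ x) :
    symmWeight v c x = 0 := by
  simp [symmWeight, Finsupp.finsetSum_apply, hx, hx']

lemma symmWeight_neg (c : ι → ℝ) (x : E) : symmWeight v c (-x) = symmWeight v c x := by
  classical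
  simp [symmWeight, Finsupp.finsetSum_apply, Finsupp.single_apply, neg_eq_iff_eq_neg, add_comm]

end SymmWeight

section Eutactic

variable {F : Type*} [NormedAddCommGroup F] [InnerProductSpace ℝ F] {S : Set F}

lemma finsum_symmWeight_smul_projMap {ι : Type*} [Fintype ι] (v : ι → F) (c : ι → ℝ) :
    ∑ᶠ x, symmWeight v c x • projMap x = ∑ i, c i • projMap (v i) := by
  rw [finsum_smul_eq_linearCombination]
  simp [symmWeight, projMap_neg, ← add_smul]

lemma IsSemiEutacticCfg.of_sum_smul_projMap_eq_id {ι : Type*} [Fintype ι]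
    (hS : ∀ x ∈ S, -x ∈ S) {v : ι → F} (hv : ∀ i, v i ∈ S) {c : ι → ℝ} (hc : ∀ i, 0 ≤ c i)
    (hsum : ∑ i, c i • projMap (v i) = LinearMap.id) : IsSemiEutacticCfg S := by
  refine ⟨symmWeight v c, fun x _ => symmWeight_nonneg v hc x, fun x hx => ?_,
    (symmWeight v c).hasFiniteSupport, fun x => (symmWeight_neg v c x).symm,
    (finsum_symmWeight_smul_projMap v c).trans hsum⟩
  exact symmWeight_eq_zero v c (fun i h => hx (h ▸ hv i)) fun i h => hx (h ▸ hS _ (hv i))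

lemma IsSemiEutacticCfg.exists_weight_of_diff {T : Set F} (h : IsSemiEutacticCfg (S \ T)) :
    ∃ υ : F → ℝ, (∀ x ∈ S, 0 ≤ υ x) ∧ (∀ x ∉ S, υ x = 0) ∧ (Function.support υ).Finite ∧
      (∀ x, υ x = υ (-x)) ∧ (∀ x ∈ T, υ x = 0) ∧
      ∑ᶠ x, υ x • projMap x = (LinearMap.id : F →ₗ[ℝ] F) := by
  obtain ⟨υ, hnonneg, hzero, hfin, hneg, hsum⟩ := h
  refine ⟨υ, fun x hx => ?_, fun x hx => hzero x fun h => hx h.1, hfin, hneg,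
    fun x hx => hzero x fun h => h.2 hx, hsum⟩
  by_cases hxT : x ∈ T
  · exact (hzero x fun h => h.2 hxT).ge
  · exact hnonneg x ⟨hx, hxT⟩

lemma finsum_mul_inner_mul_inner_eq_inner {υ : F → ℝ} (hfin : (Function.support υ).Finite)
    (hsum : ∑ᶠ x, υ x • projMap x = (LinearMap.id : F →ₗ[ℝ] F)) (u w : F) :
    ∑ᶠ x, υ x * (⟪u, x⟫ * ⟪w, x⟫) = ⟪u, w⟫ := by
  have hsupp : Function.HasFiniteSupport fun x => υ x • projMap x :=
    hfin.subset fun x hx => left_ne_zero_of_smul hx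
  have h := map_finsum (innerₗ F w ∘ₗ LinearMap.applyₗ u) hsupp
  rw [hsum] at h
  simpa [projMap_apply, real_inner_smul_right, real_inner_comm] using h.symm

lemma IsEutacticCfg.inner_pos (h : IsEutacticCfg S) {u w : F}
    (hnonneg : ∀ x ∈ S, 0 ≤ ⟪u, x⟫ * ⟪w, x⟫) (hpos : ∃ x ∈ S, 0 < ⟪u, x⟫ * ⟪w, x⟫) :
    0 < ⟪u, w⟫ := by
  obtain ⟨υ, hυ, hzero, hfin, -, hsum⟩ := h
  obtain ⟨y, hyS, hy⟩ := hpos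
  rw [← finsum_mul_inner_mul_inner_eq_inner hfin hsum]
  refine finsum_pos (fun x => ?_) ⟨y, mul_pos (hυ y hyS) hy⟩
    (hfin.subset fun x hx => left_ne_zero_of_mul hx)
  by_cases hx : x ∈ S
  · exact mul_nonneg (hυ x hx).le (hnonneg x hx)
  · simp [hzero x hx]

end Eutactic

lemma exists_mem_derangements_ne {α : Type*} [Fintype α] (hα : 4 ≤ Fintype.card α) {i j : α}
    (hij : i ≠ j) : ∃ π ∈ derangements α, π i ≠ j ∧ π j ≠ i := by
  obtain ⟨m, hm⟩ := Nat.exists_eq_add_of_le' hα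
  have h02 : (0 : Fin (m + 4)) ≠ 2 := by simp [Fin.ext_iff, Nat.mod_eq_of_lt]
  obtain ⟨e, hi, hj⟩ : ∃ e : α ≃ Fin (m + 4), e i = 0 ∧ e j = 2 := by
    have e₀ := Fintype.equivFinOfCardEq hm
    obtain ⟨g, hi, hj⟩ := MulAction.is_two_pretransitive_iff.1
      (Equiv.Perm.isMultiplyPretransitive (Fin (m + 4)) 2) (e₀.injective.ne hij) h02
    exact ⟨e₀.trans g, hi, hj⟩
  refine ⟨e.symm.permCongr (finRotate (m + 4)), fun k => ?_, ?_, ?_⟩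
  · simp [Equiv.symm_apply_eq]
  · simp [Equiv.symm_apply_eq, hi, hj, Fin.ext_iff, Nat.mod_eq_of_lt]
  · simp [Equiv.symm_apply_eq, hi, hj, Fin.ext_iff, Fin.val_add, Nat.mod_eq_of_lt]

section RootD

variable {n : ℕ} {i j : Fin n} {σ τ : ℝ} {x x₀ : Euc n}

/-- The vector `(σeᵢ + τeⱼ)/√2`, which for `i ≠ j` and signs `σ`, `τ` is a minimal vector of
`Dₙ`. -/
def rootD (i j : Fin n) (σ τ : ℝ) : Euc n :=
  (√2)⁻¹ • (σ • EuclideanSpace.single i 1 + τ • EuclideanSpace.single j 1)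

lemma rootD_mem_rootCfgD (hij : i ≠ j) (hσ : σ = 1 ∨ σ = -1) (hτ : τ = 1 ∨ τ = -1) :
    rootD i j σ τ ∈ rootCfgD n :=
  ⟨i, j, hij, σ, τ, hσ, hτ, rfl⟩

lemma rootD_comm (i j : Fin n) (σ τ : ℝ) : rootD i j σ τ = rootD j i τ σ := by
  rw [rootD, add_comm, rootD]

lemma neg_rootD (i j : Fin n) (σ τ : ℝ) : -rootD i j σ τ = rootD i j (-σ) (-τ) := by
  simp only [rootD]
  module

lemma neg_mem_rootCfgD (hx : x ∈ rootCfgD n) : -x ∈ rootCfgD n := by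
  obtain ⟨i, j, hij, σ, τ, hσ, hτ, rfl⟩ := hx
  refine ⟨i, j, hij, -σ, -τ, ?_, ?_, neg_rootD i j σ τ⟩
  · simpa [neg_eq_iff_eq_neg, or_comm] using hσ
  · simpa [neg_eq_iff_eq_neg, or_comm] using hτ

lemma rootD_apply_mul_rootD_apply (hij : i ≠ j) (k l : Fin n) (σ τ : ℝ) :
    rootD k l σ τ i * rootD k l σ τ j = if s(k, l) = s(i, j) then σ * τ / 2 else 0 := by
  have hsqrt : (√2)⁻¹ * (√2)⁻¹ = (2 : ℝ)⁻¹ := by rw [← mul_inv, Real.mul_self_sqrt zero_le_two]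
  have happly (m : Fin n) : rootD k l σ τ m =
      (√2)⁻¹ * ((if m = k then σ else 0) + if m = l then τ else 0) := by
    simp [rootD, mul_add]
  rw [happly, happly, mul_mul_mul_comm, hsqrt]
  simp only [Sym2.eq_iff]
  grind

lemma exists_apply_mul_apply_ne_zero (hx : x ∈ rootCfgD n) : ∃ i j, i ≠ j ∧ x i * x j ≠ 0 := by
  obtain ⟨i, j, hij, σ, τ, hσ, hτ, rfl : x = rootD i j σ τ⟩ := hx
  refine ⟨i, j, hij, ?_⟩
  rw [rootD_apply_mul_rootD_apply hij, if_pos rfl]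
  rcases hσ with rfl | rfl <;> rcases hτ with rfl | rfl <;> norm_num

lemma exists_eq_rootD_of_apply_mul_apply_ne_zero (hij : i ≠ j) (hx : x ∈ rootCfgD n)
    (hne : x i * x j ≠ 0) :
    ∃ σ τ : ℝ, (σ = 1 ∨ σ = -1) ∧ (τ = 1 ∨ τ = -1) ∧ x = rootD i j σ τ := by
  obtain ⟨k, l, -, σ, τ, hσ, hτ, rfl : x = rootD k l σ τ⟩ := hx
  rw [rootD_apply_mul_rootD_apply hij, Ne, ite_eq_right_iff, Classical.not_imp, Sym2.eq_iff] at hne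
  obtain ⟨⟨rfl, rfl⟩ | ⟨rfl, rfl⟩, -⟩ := hne
  · exact ⟨σ, τ, hσ, hτ, rfl⟩
  · exact ⟨τ, σ, hτ, hσ, rootD_comm ..⟩

lemma exists_apply_mul_apply_eq_neg (hij : i ≠ j) (hx : x ∈ rootCfgD n) (hne : x i * x j ≠ 0) :
    ∃ y ∈ rootCfgD n, y i * y j = -(x i * x j) := by
  obtain ⟨σ, τ, hσ, hτ, rfl⟩ := exists_eq_rootD_of_apply_mul_apply_ne_zero hij hx hne
  refine ⟨rootD i j σ (-τ), rootD_mem_rootCfgD hij hσ ?_, ?_⟩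
  · simpa [neg_eq_iff_eq_neg, or_comm] using hτ
  · simp only [rootD_apply_mul_rootD_apply hij, if_pos]
    ring

lemma apply_mul_apply_eq_of_mem_pair (hx : x ∈ ({x₀, -x₀} : Set (Euc n))) (i j : Fin n) :
    x i * x j = x₀ i * x₀ j := by
  rcases hx with rfl | rfl
  · rfl
  · simp

lemma mem_pair_of_apply_mul_apply_pos (hij : i ≠ j) (hx₀ : x₀ ∈ rootCfgD n) (hx : x ∈ rootCfgD n)
    (hpos : 0 < x₀ i * x₀ j * (x i * x j)) : x ∈ ({x₀, -x₀} : Set (Euc n)) := by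
  obtain ⟨σ, τ, hσ, hτ, rfl⟩ :=
    exists_eq_rootD_of_apply_mul_apply_ne_zero hij hx₀ (left_ne_zero_of_mul hpos.ne')
  obtain ⟨σ', τ', hσ', hτ', rfl⟩ :=
    exists_eq_rootD_of_apply_mul_apply_ne_zero hij hx (right_ne_zero_of_mul hpos.ne')
  rw [rootD_apply_mul_rootD_apply hij, rootD_apply_mul_rootD_apply hij, if_pos rfl,
    if_pos rfl] at hpos
  have hsigns : σ' = σ ∧ τ' = τ ∨ σ' = -σ ∧ τ' = -τ := by
    rcases hσ with rfl | rfl <;> rcases hτ with rfl | rfl <;> rcases hσ' with rfl | rfl <;>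
      rcases hτ' with rfl | rfl <;> norm_num at hpos <;> norm_num
  rcases hsigns with ⟨rfl, rfl⟩ | ⟨rfl, rfl⟩
  · exact Or.inl rfl
  · exact Or.inr (neg_rootD i j σ τ).symm

lemma isSemiEutacticCfg_rootCfgD_diff_pair (hn : 4 ≤ n) (hx₀ : x₀ ∈ rootCfgD n) :
    IsSemiEutacticCfg (rootCfgD n \ {x₀, -x₀}) := by
  obtain ⟨i, j, hij, hne⟩ := exists_apply_mul_apply_ne_zero hx₀
  obtain ⟨π, hπ, hπi, hπj⟩ := exists_mem_derangements_ne (by simpa using hn) hij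
  have hmem (k : Fin n) {τ : ℝ} (hτ : τ = 1 ∨ τ = -1) :
      rootD k (π k) 1 τ ∈ rootCfgD n \ {x₀, -x₀} := by
    have hk : s(k, π k) ≠ s(i, j) := by
      rw [Ne, Sym2.eq_iff]
      rintro (⟨rfl, h⟩ | ⟨rfl, h⟩)
      exacts [hπi h, hπj h]
    refine ⟨rootD_mem_rootCfgD (hπ k).symm (Or.inl rfl) hτ, fun hpair => hne ?_⟩
    rw [← apply_mul_apply_eq_of_mem_pair hpair, rootD_apply_mul_rootD_apply hij, if_neg hk]
  refine .of_sum_smul_projMap_eq_id (ι := Fin n ⊕ Fin n) ?_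
    (v := Sum.elim (fun k => rootD k (π k) 1 1) fun k => rootD k (π k) 1 (-1)) ?_
    (c := fun _ => 2⁻¹) (fun _ => by positivity) ?_
  · rintro x ⟨hx, hx'⟩
    exact ⟨neg_mem_rootCfgD hx, by simpa [neg_eq_iff_eq_neg, or_comm] using hx'⟩
  · rintro (k | k)
    exacts [hmem k (Or.inl rfl), hmem k (Or.inr rfl)]
  · have hsum := sum_projMap_orthonormalBasis_perm (EuclideanSpace.basisFun (Fin n) ℝ) π
    simpa [rootD, Finset.sum_add_distrib, sub_eq_add_neg] using hsum

lemma not_isEutacticCfg_rootCfgD_diff_pair (hx₀ : x₀ ∈ rootCfgD n) :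
    ¬ IsEutacticCfg (rootCfgD n \ {x₀, -x₀}) := by
  intro h
  obtain ⟨i, j, hij, hne⟩ := exists_apply_mul_apply_ne_zero hx₀
  have hinner (x : Euc n) :
      ⟪EuclideanSpace.single i (x₀ i), x⟫ * ⟪EuclideanSpace.single j (-x₀ j), x⟫ =
        -(x₀ i * x₀ j * (x i * x j)) := by
    simp only [EuclideanSpace.inner_single_left, conj_trivial]
    ring
  have horth : ⟪EuclideanSpace.single i (x₀ i), EuclideanSpace.single j (-x₀ j)⟫ = 0 := by
    simp [EuclideanSpace.inner_single_left, hij]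
  refine (h.inner_pos (fun x hx => ?_) ?_).ne' horth
  · rw [hinner, neg_nonneg]
    exact not_lt.1 fun hpos => hx.2 (mem_pair_of_apply_mul_apply_pos hij hx₀ hx.1 hpos)
  · obtain ⟨y, hy, hyneg⟩ := exists_apply_mul_apply_eq_neg hij hx₀ hne
    have hpos : 0 < (x₀ i * x₀ j) * (x₀ i * x₀ j) := mul_self_pos.2 hne
    refine ⟨y, ⟨hy, fun hpair => hne ?_⟩, by rw [hinner, hyneg]; linarith⟩
    linarith [apply_mul_apply_eq_of_mem_pair hpair i j]

end RootD

/-- Lemma 3.1, `Dₙ` case: for `n ≥ 4`, the configuration of minimal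
vectors of `Dₙ` is redundantly semi-eutactic (a) but not redundantly extreme, as witnessed
by `x₀ = (e₁ + e₂)/√2` (b). -/
theorem rootCfgD_red_semiEutactic_not_red_extreme (n : ℕ) (hn : 4 ≤ n) :
    (∀ x₀ ∈ rootCfgD n, ∃ υ : Euc n → ℝ,
      (∀ x ∈ rootCfgD n, 0 ≤ υ x) ∧ (∀ x ∉ rootCfgD n, υ x = 0) ∧
      (Function.support υ).Finite ∧ (∀ x, υ x = υ (-x)) ∧
      υ x₀ = 0 ∧ υ (-x₀) = 0 ∧
      ∑ᶠ x, υ x • projMap x = (LinearMap.id : Euc n →ₗ[ℝ] Euc n)) ∧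
    ¬ IsEutacticCfg (rootCfgD n \
      {(Real.sqrt 2)⁻¹ • (EuclideanSpace.single (⟨0, by omega⟩ : Fin n) (1 : ℝ) +
          EuclideanSpace.single (⟨1, by omega⟩ : Fin n) (1 : ℝ)),
        -((Real.sqrt 2)⁻¹ • (EuclideanSpace.single (⟨0, by omega⟩ : Fin n) (1 : ℝ) +
          EuclideanSpace.single (⟨1, by omega⟩ : Fin n) (1 : ℝ)))}) := by
  refine ⟨fun x₀ hx₀ => ?_, not_isEutacticCfg_rootCfgD_diff_pair ?_⟩
  · obtain ⟨υ, hnonneg, hzero, hfin, hneg, hpair, hsum⟩ :=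
      (isSemiEutacticCfg_rootCfgD_diff_pair hn hx₀).exists_weight_of_diff
    exact ⟨υ, hnonneg, hzero, hfin, hneg, hpair x₀ (by simp), hpair (-x₀) (by simp), hsum⟩
  · exact ⟨⟨0, by omega⟩, ⟨1, by omega⟩, by simp, 1, 1, by simp, by simp, by simp⟩

end
end
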